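/- arXiv:2508.07097 — 3 statements merged into one kernel-verified Lean document; each statement's English description precedes it below -/
import Mathlib

section
/- Let φ: (R,m,k) → (S,n,ℓ) be a surjective local ring homomorphism between commutative Noetherian local rings whose kernel is generated by an R-regular sequence, and let M be a finitely generated S-module. If cidim-fd_R M < ∞, then cidim_S M < ∞. -/
/-!
Common definitions: André–Quillen homology via the standard (comonad/polynomial)
simplicial resolution, complete-intersection (flat) dimensions via quasi-deformations,
Cohen factorizations, Koszul homology `H₁`, and related notions.
-/

universe u

open TensorProduct IsLocalRing

noncomputable section

/-! ### Flat and projective dimension -/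

/-- `FlatDimLE Q n N` : the `Q`-module `N` has flat dimension at most `n`,
i.e. it admits a flat resolution of length at most `n`. -/
def FlatDimLE (Q : Type u) [CommRing Q] : ℕ → (N : Type u) → [AddCommGroup N] → [Module Q N] → Prop
  | 0, N, _, _ => Module.Flat Q N
  | n+1, N, _, _ =>
      ∃ (F : Type u) (_ : AddCommGroup F) (_ : Module Q F) (f : F →ₗ[Q] N),
        Module.Flat Q F ∧ Function.Surjective f ∧ FlatDimLE Q n (LinearMap.ker f)

/-- `ProjDimLE Q n N` : the `Q`-module `N` has projective dimension at most `n`. -/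
def ProjDimLE (Q : Type u) [CommRing Q] : ℕ → (N : Type u) → [AddCommGroup N] → [Module Q N] → Prop
  | 0, N, _, _ => Module.Projective Q N
  | n+1, N, _, _ =>
      ∃ (F : Type u) (_ : AddCommGroup F) (_ : Module Q F) (f : F →ₗ[Q] N),
        Module.Projective Q F ∧ Function.Surjective f ∧ ProjDimLE Q n (LinearMap.ker f)

/-- The flat dimension `fd_Q N` is finite. -/
def FlatDimFinite (Q : Type u) [CommRing Q] (N : Type u) [AddCommGroup N] [Module Q N] : Prop :=
  ∃ n : ℕ, FlatDimLE Q n N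

/-- The projective dimension `pd_Q N` is finite. -/
def ProjDimFinite (Q : Type u) [CommRing Q] (N : Type u) [AddCommGroup N] [Module Q N] : Prop :=
  ∃ n : ℕ, ProjDimLE Q n N

/-! ### Regular sequences, regular local rings, complete intersection conditions -/

/-- The ideal `I` is generated by an `A`-regular sequence. -/
def GeneratedByRegularSequence (A : Type u) [CommRing A] (I : Ideal A) : Prop :=
  ∃ rs : List A, RingTheory.Sequence.IsRegular A rs ∧ Ideal.span {x | x ∈ rs} = I

/-- A (Noetherian local) ring is regular iff its maximal ideal is generated by a
regular sequence. -/
def IsRegularLocal (A : Type u) [CommRing A] : Prop :=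
  IsNoetherianRing A ∧
    ∃ h : IsLocalRing A, GeneratedByRegularSequence A (@IsLocalRing.maximalIdeal A _ h)

/-- A local homomorphism is weakly regular if it is flat with regular closed fibre. -/
def IsWeaklyRegularHom (A B : Type u) [CommRing A] [CommRing B] [IsLocalRing A]
    (f : A →+* B) : Prop :=
  IsLocalHom f ∧ (letI := f.toAlgebra; Module.Flat A B) ∧
    IsRegularLocal (B ⧸ Ideal.map f (maximalIdeal A))

/-- `R'' → f → g` is a Cohen factorization of the semi-completion of `ψ : A → B`
with respect to the (maximal) ideal `J` of `B`:  `A → R'' → B̂` with `A → R''`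
weakly regular, `R''` complete Noetherian local and `R'' → B̂` surjective local. -/
def IsCohenFactorizationAt (A B : Type u) [CommRing A] [CommRing B] [IsLocalRing A]
    (ψ : A →+* B) (J : Ideal B) (R'' : Type u) [CommRing R'']
    (f : A →+* R'') (g : R'' →+* AdicCompletion J B) : Prop :=
  g.comp f = (algebraMap B (AdicCompletion J B)).comp ψ ∧
  IsNoetherianRing R'' ∧
  (∃ h : IsLocalRing R'', IsAdicComplete (@IsLocalRing.maximalIdeal R'' _ h) R'') ∧
  IsWeaklyRegularHom A R'' f ∧
  Function.Surjective g ∧ IsLocalHom g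

/-- `ψ : A → B` is complete intersection (c.i.) at the ideal `J` (typically the
maximal ideal of `B`): in a Cohen factorization `A → R'' → B̂` of the
semi-completion of `ψ`, the kernel of `R'' → B̂` is generated by a regular sequence. -/
def IsCIAt (A B : Type u) [CommRing A] [CommRing B] [IsLocalRing A]
    (ψ : A →+* B) (J : Ideal B) : Prop :=
  ∃ (R'' : Type u) (_ : CommRing R'') (f : A →+* R'') (g : R'' →+* AdicCompletion J B),
    IsCohenFactorizationAt A B ψ J R'' f g ∧ GeneratedByRegularSequence R'' (RingHom.ker g)

/-- A Noetherian local ring is a complete intersection if its completion is the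
quotient of a complete regular local ring by an ideal generated by a regular sequence. -/
def IsCompleteIntersectionRing (A : Type u) [CommRing A] : Prop :=
  IsNoetherianRing A ∧
  ∃ h : IsLocalRing A,
    ∃ (Q : Type u) (_ : CommRing Q)
      (g : Q →+* AdicCompletion (@IsLocalRing.maximalIdeal A _ h) A),
      IsRegularLocal Q ∧ (∃ hq : IsLocalRing Q, IsAdicComplete (@IsLocalRing.maximalIdeal Q _ hq) Q) ∧
      Function.Surjective g ∧ GeneratedByRegularSequence Q (RingHom.ker g)

/-! ### Complete intersection (flat) dimensions via quasi-deformations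

`R → R' ← Q` is a quasi-deformation when `R → R'` is flat local and `Q → R'` is
surjective local with kernel generated by a `Q`-regular sequence (all rings
Noetherian local).  The various complete intersection (flat) dimensions
`CI-fd`, `CI-dim`, `CI*-fd`, `CI*-dim`, `cidim-fd`, `cidim` of a module `M` are
`inf { fd_Q(R' ⊗_R M) - pd_Q R' }` over (upper / complete intersection)
quasi-deformations; such a dimension is finite iff there is a quasi-deformation
of the appropriate kind for which both `fd_Q (R' ⊗_R M)` and `pd_Q R'` are finite. -/

/-- The conditions on `R → R' ← Q` making it a quasi-deformation. -/
def IsQuasiDeformation (R R' Q : Type u) [CommRing R] [CommRing R'] [CommRing Q]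
    (f : R →+* R') (g : Q →+* R') : Prop :=
  IsLocalRing R' ∧ IsLocalRing Q ∧ IsNoetherianRing R' ∧ IsNoetherianRing Q ∧
  IsLocalHom f ∧ IsLocalHom g ∧ (letI := f.toAlgebra; Module.Flat R R') ∧
  Function.Surjective g ∧ GeneratedByRegularSequence Q (RingHom.ker g)

/-- `CI-fd_R M < ∞` (equivalently, for finitely generated `M`, `CI-dim_R M < ∞`):
there is a quasi-deformation `R → R' ← Q` with `fd_Q (R' ⊗_R M)` and `pd_Q R'` finite. -/
def HasFiniteCIDim (R : Type u) [CommRing R] (M : Type u) [AddCommGroup M] [Module R M] : Prop :=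
  ∃ (R' Q : Type u) (_ : CommRing R') (_ : CommRing Q) (f : R →+* R') (g : Q →+* R'),
    IsQuasiDeformation R R' Q f g ∧
    (letI := f.toAlgebra;
     letI := g.toAlgebra;
     letI : Module Q (R' ⊗[R] M) := Module.compHom _ g;
     FlatDimFinite Q (R' ⊗[R] M) ∧ ProjDimFinite Q R')

/-- `CI*-fd_R M < ∞` (resp. `CI*-dim_R M < ∞`): as in `HasFiniteCIDim` but over
upper quasi-deformations, i.e. `R → R'` is weakly regular. -/
def HasFiniteUpperCIDim (R : Type u) [CommRing R] [IsLocalRing R]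
    (M : Type u) [AddCommGroup M] [Module R M] : Prop :=
  ∃ (R' Q : Type u) (_ : CommRing R') (_ : CommRing Q) (f : R →+* R') (g : Q →+* R'),
    IsQuasiDeformation R R' Q f g ∧ IsWeaklyRegularHom R R' f ∧
    (letI := f.toAlgebra;
     letI := g.toAlgebra;
     letI : Module Q (R' ⊗[R] M) := Module.compHom _ g;
     FlatDimFinite Q (R' ⊗[R] M) ∧ ProjDimFinite Q R')

/-- `cidim-fd_R M < ∞` (resp. `cidim_R M < ∞`): as in `HasFiniteCIDim` but over
complete intersection quasi-deformations, i.e. `R → R'` is c.i. at the maximal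
ideal of `R'`. -/
def HasFiniteCIQDDim (R : Type u) [CommRing R] [IsLocalRing R]
    (M : Type u) [AddCommGroup M] [Module R M] : Prop :=
  ∃ (R' Q : Type u) (_ : CommRing R') (_ : CommRing Q) (hR' : IsLocalRing R')
    (f : R →+* R') (g : Q →+* R'),
    IsQuasiDeformation R R' Q f g ∧
    IsCIAt R R' f (@IsLocalRing.maximalIdeal R' _ hR') ∧
    (letI := f.toAlgebra;
     letI := g.toAlgebra;
     letI : Module Q (R' ⊗[R] M) := Module.compHom _ g;
     FlatDimFinite Q (R' ⊗[R] M) ∧ ProjDimFinite Q R')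

/-! ### André–Quillen homology

`D_n(S|R, M)` is defined as the `n`-th homology of `L ⊗_S M`, where `L` is the
cotangent complex of the `R`-algebra `S`: the complex associated to the standard
simplicial resolution `X` of `S` by polynomial `R`-algebras (the comonad
resolution `X_n = G^{n+1} S`, `G A = R[A]`), with `L_n = S ⊗_{X_n} Ω_{X_n/R}`
the free `S`-module on the variables of `X_n` and differentials the alternating
sums of the maps induced by the face maps. -/

/-- `AQV R S n` is, for `n ≥ 1`, the `n`-th ring in the standard simplicial
polynomial resolution of `S` over `R` (and `AQV R S 0 = S` as an index set). -/
def AQV (R S : Type u) [CommRing R] : ℕ → Type u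
  | 0 => S
  | n+1 => MvPolynomial (AQV R S n) R

noncomputable instance (R S : Type u) [CommRing R] (n : ℕ) : CommRing (AQV R S (n+1)) :=
  inferInstanceAs (CommRing (MvPolynomial (AQV R S n) R))

noncomputable instance (R S : Type u) [CommRing R] (n : ℕ) : Algebra R (AQV R S (n+1)) :=
  inferInstanceAs (Algebra R (MvPolynomial (AQV R S n) R))

/-- The augmentations `X_n → S` of the standard resolution. -/
def AQaug (R S : Type u) [CommRing R] [CommRing S] [Algebra R S] :
    (n : ℕ) → (AQV R S (n+1) →ₐ[R] S)
  | 0 => MvPolynomial.aeval (id : S → S)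
  | n+1 => MvPolynomial.aeval (fun v : AQV R S (n+1) => AQaug R S n v)

/-- The face maps `dᵢ : X_{n+1} → X_n` of the standard resolution: `d₀` is the
counit and `d_{i+1} = G(dᵢ)`. -/
def AQface (R S : Type u) [CommRing R] [CommRing S] [Algebra R S] :
    (n : ℕ) → (i : ℕ) → (AQV R S (n+2) →ₐ[R] AQV R S (n+1))
  | n, 0 => MvPolynomial.aeval (id : AQV R S (n+1) → AQV R S (n+1))
  | 0, _+1 => MvPolynomial.rename ⇑(AQaug R S 0)
  | n+1, i+1 => MvPolynomial.rename ⇑(AQface R S n i)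

variable (R S : Type u) [CommRing R] [CommRing S] [Algebra R S]
variable (M : Type u) [AddCommGroup M] [Module S M]

/-- The map `L_{n+1} ⊗ M → L_n ⊗ M` induced by an `R`-algebra map
`f : X_{n+1} → X_n` on the (base-changed) Kähler differentials: the free module
on the variables `v` of `X_{n+1}` maps by `e_v ↦ ∑_w aug(∂(f Xᵥ)/∂w) • e_w`. -/
def AQind (n : ℕ) (f : AQV R S (n+2) →ₐ[R] AQV R S (n+1)) :
    (AQV R S (n+1) →₀ M) →ₗ[S] (AQV R S n →₀ M) :=
  Finsupp.lsum S fun v : AQV R S (n+1) =>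
    letI : DecidableEq (AQV R S n) := Classical.decEq _
    let P : MvPolynomial (AQV R S n) R := f (MvPolynomial.X v)
    ∑ w ∈ P.vars,
      (Finsupp.lsingle w).comp
        ((AQaug R S n ((MvPolynomial.pderiv w) P) : S) • (LinearMap.id : M →ₗ[S] M))

/-- The differential `L_{n+1} ⊗ M → L_n ⊗ M` of the cotangent complex:
the alternating sum of the maps induced by the face maps. -/
def AQdiff (n : ℕ) : (AQV R S (n+1) →₀ M) →ₗ[S] (AQV R S n →₀ M) :=
  ∑ i ∈ Finset.range (n+2), ((-1 : ℤ)^i) • AQind R S M n (AQface R S n i)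

/-- Cycles of the cotangent complex with coefficients in `M`. -/
def AQcycles : (n : ℕ) → Submodule S (AQV R S n →₀ M)
  | 0 => ⊤
  | n+1 => LinearMap.ker (AQdiff R S M n)

/-- André–Quillen homology `D_n(S|R, M)`. -/
def AQH (n : ℕ) : Type u :=
  AQcycles R S M n ⧸
    (LinearMap.range (AQdiff R S M n)).comap (AQcycles R S M n).subtype

noncomputable instance (n : ℕ) : AddCommGroup (AQH R S M n) :=
  inferInstanceAs (AddCommGroup (AQcycles R S M n ⧸
    (LinearMap.range (AQdiff R S M n)).comap (AQcycles R S M n).subtype))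

/-- `AQdimLE R S d`: the André–Quillen dimension of the `R`-algebra `S` is at
most `d`, i.e. `D_n(S|R, -) = 0` for all `n > d`. -/
def AQdimLE (d : ℕ) : Prop :=
  ∀ n : ℕ, d < n → ∀ (N : Type u) (iN : AddCommGroup N) (mN : Module S N),
    Subsingleton (@AQH R S _ _ _ N iN mN n)

/-- `AQ-dim_R S < ∞`. -/
def AQdimFinite : Prop := ∃ d : ℕ, AQdimLE R S d

/-! ### Koszul homology `H₁` -/

/-- First differential of the Koszul complex on `x : Fin c → A`. -/
def koszulD1 (A : Type u) [CommRing A] {c : ℕ} (x : Fin c → A) : (Fin c → A) →ₗ[A] A :=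
  ∑ i, x i • (LinearMap.proj i : ((Fin c → A)) →ₗ[A] A)

/-- One-cycles of the Koszul complex on `x`. -/
def koszulZ1 (A : Type u) [CommRing A] {c : ℕ} (x : Fin c → A) : Submodule A (Fin c → A) :=
  LinearMap.ker (koszulD1 A x)

/-- One-boundaries of the Koszul complex on `x` (the image of the second Koszul
differential, spanned by the elements `xᵢ eⱼ - xⱼ eᵢ`). -/
def koszulB1 (A : Type u) [CommRing A] {c : ℕ} (x : Fin c → A) : Submodule A (Fin c → A) :=
  Submodule.span A
    {v : Fin c → A | ∃ i j, v =
      x i • (Pi.single j (1 : A) : Fin c → A) - x j • (Pi.single i (1 : A) : Fin c → A)}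

/-- First Koszul homology of the sequence `x : Fin c → A`. -/
def KoszulH1 (A : Type u) [CommRing A] {c : ℕ} (x : Fin c → A) : Type u :=
  koszulZ1 A x ⧸ (koszulB1 A x).comap (koszulZ1 A x).subtype

noncomputable instance (A : Type u) [CommRing A] {c : ℕ} (x : Fin c → A) :
    AddCommGroup (KoszulH1 A x) :=
  inferInstanceAs (AddCommGroup (koszulZ1 A x ⧸ (koszulB1 A x).comap (koszulZ1 A x).subtype))

noncomputable instance (A : Type u) [CommRing A] {c : ℕ} (x : Fin c → A) :
    Module A (KoszulH1 A x) :=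
  inferInstanceAs (Module A (koszulZ1 A x ⧸ (koszulB1 A x).comap (koszulZ1 A x).subtype))

/-- `H₁(K(σ))` is a free `T̂`-module:  for any Cohen factorization
`S → S'' → T̂` of the semi-completion of `σ` and any finite generating set `x` of
`ker (S'' → T̂)`, the first Koszul homology of `x`, base-changed to `T̂`
(it is killed by `ker (S'' → T̂)`), is a free `T̂`-module. -/
def KoszulH1FreeHom (S T : Type u) [CommRing S] [CommRing T] [IsLocalRing S] [IsLocalRing T]
    (σ : S →+* T) : Prop :=
  ∀ (S'' : Type u) (_ : CommRing S'') (f : S →+* S'')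
    (g : S'' →+* AdicCompletion (maximalIdeal T) T),
    IsCohenFactorizationAt S T σ (maximalIdeal T) S'' f g →
    ∀ (c : ℕ) (x : Fin c → S''), Ideal.span (Set.range x) = RingHom.ker g →
      (letI := g.toAlgebra;
       Module.Free (AdicCompletion (maximalIdeal T) T)
         ((AdicCompletion (maximalIdeal T) T) ⊗[S''] (KoszulH1 S'' x)))

/-! ### Separability (MacLane) -/

/-- A field extension `ℓ/k` is separable (in the sense of MacLane, allowing
non-algebraic extensions) iff `K ⊗_k ℓ` is reduced for every field extension `K/k`. -/
def IsSeparableFieldExtension (k ℓ : Type u) [Field k] [Field ℓ] [Algebra k ℓ] : Prop :=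
  ∀ (K : Type u) (_ : Field K) (_ : Algebra k K), IsReduced (K ⊗[k] ℓ)

end


open CategoryTheory in
lemma aux_projDimLE (Q : Type u) [CommRing Q] (n : ℕ) : ∀ (N : Type u) [AddCommGroup N] [Module Q N],
    HasProjectiveDimensionLT (ModuleCat.of Q N) (n+1) → ProjDimLE Q n N := by
  induction n with
  | zero =>
    intro N _ _ h
    have : Projective (ModuleCat.of Q N) := (projective_iff_hasProjectiveDimensionLT_one).mpr h
    exact (IsProjective.iff_projective (R := Q) (P := N)).mpr this
  | succ n ih =>
    intro N _ _ h
    let f : (N →₀ Q) →ₗ[Q] N := Finsupp.linearCombination Q id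
    have hf : Function.Surjective f := Finsupp.linearCombination_id_surjective Q N
    refine ⟨(N →₀ Q), inferInstance, inferInstance, f, inferInstance, hf, ih _ ?_⟩
    let S : ShortComplex (ModuleCat.{u} Q) := ShortComplex.mk
      (X₁ := ModuleCat.of Q (LinearMap.ker f)) (X₂ := ModuleCat.of Q (N →₀ Q)) (X₃ := ModuleCat.of Q N)
      (ModuleCat.ofHom (LinearMap.ker f).subtype) (ModuleCat.ofHom f) (by
        apply ModuleCat.hom_ext
        apply LinearMap.ext
        intro x; exact x.2)
    have hS : S.ShortExact :=
      { exact := by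
          rw [ShortComplex.moduleCat_exact_iff]
          intro x hx
          exact ⟨⟨x, hx⟩, rfl⟩
        mono_f := (ModuleCat.mono_iff_injective _).mpr (Submodule.injective_subtype _)
        epi_g := (ModuleCat.epi_iff_surjective _).mpr hf }
    have hp : Projective S.X₂ := (IsProjective.iff_projective (R := Q) (P := (N →₀ Q))).mp inferInstance
    exact (hS.hasProjectiveDimensionLT_X₃_iff n hp).mp h

open CategoryTheory in
lemma aux_projDimFinite (Q T : Type u) [CommRing Q] [CommRing T] [IsLocalRing Q] [IsNoetherianRing Q]
    (g : Q →+* T) (hg : Function.Surjective g) (h : GeneratedByRegularSequence Q (RingHom.ker g)) :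
    letI := g.toAlgebra; ProjDimFinite Q T := by
  let _ := g.toAlgebra
  obtain ⟨rs, reg, hrs⟩ := h
  have h1 := ModuleCat.projectiveDimension_quotient_eq_length.{u} rs reg
  let e0 : (Q ⧸ Ideal.ofList rs) ≃ₗ[Q] (Q ⧸ LinearMap.ker (Algebra.linearMap Q T)) :=
    Submodule.quotEquivOfEq _ _ (by
      change Ideal.span {x | x ∈ rs} = _
      rw [hrs]; ext; rfl)
  let e : Shrink.{u} (Q ⧸ Ideal.ofList rs) ≃ₗ[Q] T :=
    (Shrink.linearEquiv Q _).trans (e0.trans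
      ((Algebra.linearMap Q T).quotKerEquivOfSurjective hg))
  rw [projectiveDimension_eq_of_iso e.toModuleIso] at h1
  exact ⟨rs.length, aux_projDimLE Q _ T ((projectiveDimension_le_iff _ _).mp h1.le)⟩

lemma aux_flatDimLE_congr (Q : Type u) [CommRing Q] (n : ℕ) (N N' : Type u) [AddCommGroup N] [Module Q N]
    [AddCommGroup N'] [Module Q N'] (e : N ≃ₗ[Q] N') (h : FlatDimLE Q n N) : FlatDimLE Q n N' := by
  induction n generalizing N N' with
  | zero =>
    have : Module.Flat Q N := h
    exact Module.Flat.of_linearEquiv e.symm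
  | succ n ih =>
    obtain ⟨F, _, _, f, hF, hf, hk⟩ := h
    refine ⟨F, inferInstance, inferInstance, e.toLinearMap ∘ₗ f, hF, e.surjective.comp hf, ?_⟩
    refine ih _ _ (LinearEquiv.ofEq _ _ ?_) hk
    simp

lemma aux_mem_max {A : Type u} [CommRing A] [IsLocalRing A] {rs : List A} {I : Ideal A} (hI : I ≠ ⊤)
    (h : Ideal.span {x | x ∈ rs} = I) : ∀ r ∈ rs, r ∈ maximalIdeal A := fun _ hr =>
  IsLocalRing.le_maximalIdeal hI (h ▸ Ideal.subset_span hr)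

/-- lifting a regular sequence -/
lemma aux_append {Q T : Type u} [CommRing Q] [CommRing T] (g : Q →+* T) (hg : Function.Surjective g)
    (rs ss : List Q) (reg : RingTheory.Sequence.IsWeaklyRegular Q rs)
    (hrs : Ideal.span {x | x ∈ rs} = RingHom.ker g)
    (hss : RingTheory.Sequence.IsWeaklyRegular T (ss.map g)) :
    RingTheory.Sequence.IsWeaklyRegular Q (rs ++ ss) := by
  let _ := g.toAlgebra
  rw [RingTheory.Sequence.isWeaklyRegular_append_iff]
  refine ⟨reg, ?_⟩
  have h2 : RingTheory.Sequence.IsWeaklyRegular T ss :=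
    (RingTheory.Sequence.isWeaklyRegular_map_algebraMap_iff T T ss).mp hss
  let e0 : (Q ⧸ (Ideal.ofList rs • ⊤ : Submodule Q Q)) ≃ₗ[Q] (Q ⧸ LinearMap.ker (Algebra.linearMap Q T)) :=
    Submodule.quotEquivOfEq _ _ (by
      rw [smul_eq_mul, Ideal.mul_top]
      change Ideal.span {x | x ∈ rs} = _
      rw [hrs]; ext; rfl)
  exact ((e0.trans ((Algebra.linearMap Q T).quotKerEquivOfSurjective hg)).isWeaklyRegular_congr ss).mpr h2

lemma aux_unappend {Q T : Type u} [CommRing Q] [CommRing T] (g : Q →+* T) (hg : Function.Surjective g)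
    (rs ss : List Q) (reg : RingTheory.Sequence.IsWeaklyRegular Q (rs ++ ss))
    (hrs : Ideal.span {x | x ∈ rs} = RingHom.ker g) :
    RingTheory.Sequence.IsWeaklyRegular T (ss.map g) := by
  let _ := g.toAlgebra
  rw [RingTheory.Sequence.isWeaklyRegular_append_iff] at reg
  refine (RingTheory.Sequence.isWeaklyRegular_map_algebraMap_iff T T ss).mpr ?_
  let e0 : (Q ⧸ (Ideal.ofList rs • ⊤ : Submodule Q Q)) ≃ₗ[Q] (Q ⧸ LinearMap.ker (Algebra.linearMap Q T)) :=
    Submodule.quotEquivOfEq _ _ (by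
      rw [smul_eq_mul, Ideal.mul_top]
      change Ideal.span {x | x ∈ rs} = _
      rw [hrs]; ext; rfl)
  exact ((e0.trans ((Algebra.linearMap Q T).quotKerEquivOfSurjective hg)).isWeaklyRegular_congr ss).mp reg.2

lemma aux_flat {R S B : Type u} [CommRing R] [CommRing S] [CommRing B] (φ : R →+* S)
    (hφ : Function.Surjective φ) (f : R →+* B) (hf : f.Flat)
    (f' : S →+* B ⧸ (RingHom.ker φ).map f) (hf' : f'.comp φ = (Ideal.Quotient.mk _).comp f) :
    f'.Flat := by
  let _ := f.toAlgebra
  have : Module.Flat R B := hf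
  let I := RingHom.ker φ
  let e : R ⧸ I ≃+* S := RingHom.quotientKerEquivOfSurjective hφ
  let f0 : R ⧸ I →+* B ⧸ I.map f := Ideal.quotientMap _ f Ideal.le_comap_map
  have h0 : f0.Flat := by
    let _ := f0.toAlgebra
    change Module.Flat (R ⧸ I) (B ⧸ I.map f)
    let E : (R ⧸ I) ⊗[R] B ≃ₐ[R⧸I] (B ⧸ I.map f) := AlgEquiv.ofRingEquiv
      (f := ((Algebra.TensorProduct.comm R _ _).trans
      ((Algebra.TensorProduct.quotIdealMapEquivTensorQuot B I).symm.restrictScalars R)).toRingEquiv) (by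
        intro r
        obtain ⟨r, rfl⟩ := Ideal.Quotient.mk_surjective r
        simp only [AlgEquiv.coe_ringEquiv, Algebra.TensorProduct.algebraMap_apply]
        simp [Algebra.smul_def]
        rfl)
    exact Module.Flat.of_linearEquiv E.symm.toLinearEquiv
  have : f' = f0.comp (e.symm : S →+* R ⧸ I) := by
    ext s
    obtain ⟨r, rfl⟩ := hφ s
    have : e.symm (φ r) = Ideal.Quotient.mk I r := by
      rw [RingEquiv.symm_apply_eq]; rfl
    simp only [RingHom.comp_apply, RingHom.coe_coe, this]
    exact RingHom.congr_fun hf' r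
  rw [this]
  exact RingHom.Flat.comp (RingHom.Flat.of_bijective e.symm.bijective) h0

lemma aux_isLocal {A : Type u} [CommRing A] [IsLocalRing A] {J : Ideal A} (hJ : J ≠ ⊤) :
    IsLocalRing (A ⧸ J) :=
  have : Nontrivial (A ⧸ J) := Ideal.Quotient.nontrivial_iff.mpr hJ
  IsLocalRing.of_surjective' (Ideal.Quotient.mk J) Ideal.Quotient.mk_surjective

lemma aux_adicComplete {A : Type u} [CommRing A] [IsLocalRing A] [IsNoetherianRing A]
    [IsAdicComplete (maximalIdeal A) A] (J : Ideal A) [IsLocalRing (A ⧸ J)] :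
    IsAdicComplete (maximalIdeal (A ⧸ J)) (A ⧸ J) := by
  have h1 : (maximalIdeal A).map (algebraMap A (A ⧸ J)) = maximalIdeal (A ⧸ J) :=
    map_maximalIdeal_of_surjective _ Ideal.Quotient.mk_surjective
  have h2 : IsPrecomplete (maximalIdeal A) (A ⧸ J) := by
    rw [← AdicCompletion.of_surjective_iff]
    intro y
    obtain ⟨x, rfl⟩ := AdicCompletion.map_surjective (maximalIdeal A) (f := J.mkQ) J.mkQ_surjective y
    obtain ⟨x, rfl⟩ := AdicCompletion.of_surjective (maximalIdeal A) A x
    exact ⟨J.mkQ x, by rw [AdicCompletion.map_of]⟩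
  have h3 : IsPrecomplete (maximalIdeal (A ⧸ J)) (A ⧸ J) := by
    rw [← h1]; exact IsPrecomplete.map_algebraMap_iff.mpr h2
  exact { toIsHausdorff := inferInstance, toIsPrecomplete := h3 }

lemma aux_regularLocal {A B : Type u} [CommRing A] [CommRing B] (e : A ≃+* B) (h : IsRegularLocal A) :
    IsRegularLocal B := by
  obtain ⟨h1, h2, rs, reg, hrs⟩ := h
  have : IsLocalRing B := e.isLocalRing
  refine ⟨isNoetherianRing_of_ringEquiv A e, this, rs.map e, ?_, ?_⟩
  · refine (AddEquiv.isRegular_congr (e := e.toAddEquiv) ?_).mp reg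
    rw [List.forall₂_map_right_iff, List.forall₂_same]
    intro r _ x
    simp
  · have h3 : (maximalIdeal A).map (e : A →+* B) = maximalIdeal B :=
      map_maximalIdeal_of_surjective _ e.surjective
    rw [← h3, ← hrs]
    exact (Ideal.map_ofList (e : A →+* B) rs).symm

lemma aux_completion {B : Type u} [CommRing B] [IsLocalRing B] [IsNoetherianRing B] (J : Ideal B)
    [IsLocalRing (B ⧸ J)] [IsNoetherianRing (AdicCompletion (maximalIdeal B) B)] :
    ∃ h : AdicCompletion (maximalIdeal B) B →+* AdicCompletion (maximalIdeal (B ⧸ J)) (B ⧸ J),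
      h.comp (algebraMap B _) = (algebraMap (B ⧸ J) _).comp (Ideal.Quotient.mk J) ∧
      Function.Surjective h ∧ RingHom.ker h = J.map (algebraMap B _) := by
  have hm : (maximalIdeal B).map (Ideal.Quotient.mk J) = maximalIdeal (B ⧸ J) :=
    map_maximalIdeal_of_surjective _ Ideal.Quotient.mk_surjective
  have hle (n : ℕ) : maximalIdeal B ^ n ≤ (maximalIdeal (B ⧸ J) ^ n).comap (Ideal.Quotient.mk J) := by
    rw [← Ideal.map_le_iff_le_comap, Ideal.map_pow, hm]
  let F (n : ℕ) : AdicCompletion (maximalIdeal B) B →+* (B ⧸ J) ⧸ maximalIdeal (B ⧸ J) ^ n :=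
    (Ideal.quotientMap _ (Ideal.Quotient.mk J) (hle n)).comp
      (AdicCompletion.evalₐ (maximalIdeal B) n : _ →+* _)
  have hF : ∀ {m n : ℕ} (hle : m ≤ n), (Ideal.Quotient.factorPow _ hle).comp (F n) = F m := by
    intro m n hmn
    ext x
    obtain ⟨x, rfl⟩ := AdicCompletion.mk_surjective _ _ x
    simp only [F, RingHom.comp_apply, RingHom.coe_coe, AdicCompletion.evalₐ_mk, Ideal.quotientMap_mk]
    have h0 : Ideal.Quotient.mk J (x.1 n) - Ideal.Quotient.mk J (x.1 m) ∈ maximalIdeal (B ⧸ J) ^ m := by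
      rw [← map_sub]
      exact hle m (Ideal.Quotient.eq.mp (AdicCompletion.Ideal.mk_eq_mk _ hmn x))
    exact Ideal.Quotient.eq.mpr h0
  let h := AdicCompletion.liftRingHom (maximalIdeal (B ⧸ J)) F hF
  have hcomp : h.comp (algebraMap B _) = (algebraMap (B ⧸ J) _).comp (Ideal.Quotient.mk J) := by
    refine RingHom.ext fun b => ?_
    apply AdicCompletion.ext_evalₐ
    intro n
    simp only [h, RingHom.comp_apply, AdicCompletion.evalₐ_liftRingHom, F, RingHom.coe_coe, AlgHom.commutes]
    rfl
  have hmap : (maximalIdeal (AdicCompletion (maximalIdeal B) B)).map h =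
      maximalIdeal (AdicCompletion (maximalIdeal (B ⧸ J)) (B ⧸ J)) := by
    rw [AdicCompletion.maximalIdeal_eq_map, AdicCompletion.maximalIdeal_eq_map, Ideal.map_map, hcomp,
      ← Ideal.map_map, hm]
  refine ⟨h, hcomp, ?_, ?_⟩
  · have : IsHausdorff ((maximalIdeal (AdicCompletion (maximalIdeal B) B)).map h)
      (AdicCompletion (maximalIdeal (B ⧸ J)) (B ⧸ J)) := by
      rw [hmap]; infer_instance
    refine surjective_of_mk_map_comp_surjective (I := maximalIdeal (AdicCompletion (maximalIdeal B) B)) h ?_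
    intro y
    obtain ⟨y, rfl⟩ := Ideal.Quotient.mk_surjective y
    obtain ⟨c, hc⟩ := (AdicCompletion.residueField_map_bijective (R := B ⧸ J)).2 (residue _ y)
    obtain ⟨c, rfl⟩ := residue_surjective c
    obtain ⟨b, rfl⟩ := Ideal.Quotient.mk_surjective c
    refine ⟨algebraMap B _ b, ?_⟩
    have hb := RingHom.congr_fun hcomp b
    rw [RingHom.comp_apply] at hb
    rw [RingHom.comp_apply, hb, Ideal.Quotient.eq, hmap,
      ← residue_eq_zero_iff, map_sub, ← hc, sub_eq_zero]
    rfl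
  · apply le_antisymm
    · intro a ha
      rw [RingHom.mem_ker] at ha
      have key : ∀ n, ∃ j ∈ J.map (algebraMap B (AdicCompletion (maximalIdeal B) B)), a - j ∈ maximalIdeal (AdicCompletion (maximalIdeal B) B) ^ n := by
        intro n
        have h1 : F n a = 0 := by
          rw [← AdicCompletion.evalₐ_liftRingHom _ F hF]
          exact (congrArg _ ha).trans (map_zero _)
        obtain ⟨r, hr⟩ := Ideal.Quotient.mk_surjective (AdicCompletion.evalₐ (maximalIdeal B) n a)
        have h2 : Ideal.Quotient.mk J r ∈ maximalIdeal (B ⧸ J) ^ n := by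
          simp only [F, RingHom.comp_apply, RingHom.coe_coe, ← hr, Ideal.quotientMap_mk] at h1
          exact Ideal.Quotient.eq_zero_iff_mem.mp h1
        rw [← hm, ← Ideal.map_pow, Ideal.mem_map_iff_of_surjective _ Ideal.Quotient.mk_surjective] at h2
        obtain ⟨s, hs, hsr⟩ := h2
        have h3 : r - s ∈ J := Ideal.Quotient.eq.mp hsr.symm
        refine ⟨algebraMap B (AdicCompletion (maximalIdeal B) B) (r - s), Ideal.mem_map_of_mem _ h3, ?_⟩
        have h4 : a - algebraMap B (AdicCompletion (maximalIdeal B) B) r ∈ maximalIdeal (AdicCompletion (maximalIdeal B) B) ^ n := by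
          have h5 := AdicCompletion.pow_smul_top_eq_ker_eval (I := maximalIdeal B) (M := B) (n := n)
            (maximalIdeal B).fg_of_isNoetherianRing
          have h6 : a - algebraMap B (AdicCompletion (maximalIdeal B) B) r ∈ (AdicCompletion.eval (maximalIdeal B) B n).ker := by
            rw [LinearMap.mem_ker, ← AdicCompletion.factor_evalₐ_eq_eval _ _ (by simp), map_sub,
              AlgHom.commutes, ← hr]
            exact (congrArg _ (sub_self _)).trans (map_zero _)
          rw [← h5] at h6
          rw [Ideal.smul_top_eq_map, Ideal.map_pow] at h6
          rw [AdicCompletion.maximalIdeal_eq_map]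
          exact h6
        have h7 : algebraMap B (AdicCompletion (maximalIdeal B) B) s ∈ maximalIdeal (AdicCompletion (maximalIdeal B) B) ^ n := by
          rw [AdicCompletion.maximalIdeal_eq_map, ← Ideal.map_pow]
          exact Ideal.mem_map_of_mem _ hs
        have := add_mem h4 h7
        rw [map_sub]
        convert this using 1
        ring
      rw [← Ideal.Quotient.eq_zero_iff_mem]
      apply IsHausdorff.haus (I := maximalIdeal (AdicCompletion (maximalIdeal B) B)) (M := (AdicCompletion (maximalIdeal B) B) ⧸ J.map (algebraMap B (AdicCompletion (maximalIdeal B) B))) inferInstance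
      intro n
      obtain ⟨j, hj, hn⟩ := key n
      rw [SModEq.zero]
      have : Ideal.Quotient.mk (J.map (algebraMap B (AdicCompletion (maximalIdeal B) B))) a =
          (a - j) • (1 : (AdicCompletion (maximalIdeal B) B) ⧸ J.map (algebraMap B (AdicCompletion (maximalIdeal B) B))) := by
        rw [Algebra.smul_def, mul_one, Ideal.Quotient.algebraMap_eq, map_sub,
          Ideal.Quotient.eq_zero_iff_mem.mpr hj, sub_zero]
      rw [this]
      exact Submodule.smul_mem_smul hn trivial
    · rw [Ideal.map_le_iff_le_comap]
      intro j hj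
      rw [Ideal.mem_comap, RingHom.mem_ker, ← RingHom.comp_apply, hcomp, RingHom.comp_apply,
        Ideal.Quotient.eq_zero_iff_mem.mpr hj, map_zero]

lemma aux_tensor {R S B C M : Type u} [CommRing R] [CommRing S] [CommRing B] [CommRing C]
    [Algebra R S] [Algebra R B] [Algebra S C] [AddCommGroup M] [Module R M] [Module S M]
    [IsScalarTower R S M] (π : B →+* C) (hπ : Function.Surjective π)
    (hker : RingHom.ker π = (RingHom.ker (algebraMap R S)).map (algebraMap R B))
    (hsur : Function.Surjective (algebraMap R S))
    (hcomm : ∀ r, π (algebraMap R B r) = algebraMap S C (algebraMap R S r)) :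
    ∃ e : B ⊗[R] M ≃+ C ⊗[S] M, ∀ b x, e (b • x) = π b • e x := by
  have h0 : ∀ b (m : M), b ∈ RingHom.ker π → (b ⊗ₜ[R] m : B ⊗[R] M) = 0 := by
    intro b m hb
    rw [hker] at hb
    refine Submodule.span_induction (p := fun b _ => (b ⊗ₜ[R] m : B ⊗[R] M) = 0) ?_ ?_ ?_ ?_ hb
    · rintro _ ⟨r, hr, rfl⟩
      rw [Algebra.algebraMap_eq_smul_one, TensorProduct.smul_tmul, ← algebraMap_smul S r m,
        (RingHom.mem_ker).mp hr, zero_smul, TensorProduct.tmul_zero]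
    · exact TensorProduct.zero_tmul _ _
    · intro x y _ _ hx hy
      rw [TensorProduct.add_tmul, hx, hy, add_zero]
    · intro a x _ hx
      rw [← TensorProduct.smul_tmul', hx, smul_zero]
  have h1 : ∀ b b' (m : M), π b = π b' → (b ⊗ₜ[R] m : B ⊗[R] M) = b' ⊗ₜ[R] m := by
    intro b b' m h
    rw [← sub_eq_zero, ← TensorProduct.sub_tmul]
    exact h0 _ _ (by rw [RingHom.mem_ker, map_sub, h, sub_self])
  let σ := Function.surjInv hπ
  have hσ : ∀ c, π (σ c) = c := Function.surjInv_eq hπ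
  let F : B ⊗[R] M →+ C ⊗[S] M := TensorProduct.liftAddHom
    (AddMonoidHom.mk' (fun b => AddMonoidHom.mk' (fun m => π b ⊗ₜ[S] m)
      (fun x y => TensorProduct.tmul_add _ _ _)) (by
        intro x y; ext m; simp [TensorProduct.add_tmul])) (by
      intro r b m
      simp only [AddMonoidHom.mk'_apply]
      rw [Algebra.smul_def, map_mul, hcomm, ← Algebra.smul_def, TensorProduct.smul_tmul, algebraMap_smul])
  let G : C ⊗[S] M →+ B ⊗[R] M := TensorProduct.liftAddHom
    (AddMonoidHom.mk' (fun c => AddMonoidHom.mk' (fun m => σ c ⊗ₜ[R] m)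
      (fun x y => TensorProduct.tmul_add _ _ _)) (by
        intro x y; ext m
        simp only [AddMonoidHom.mk'_apply, AddMonoidHom.add_apply]
        rw [← TensorProduct.add_tmul]
        apply h1
        simp [hσ])) (by
      intro s c m
      obtain ⟨r, rfl⟩ := hsur s
      simp only [AddMonoidHom.mk'_apply]
      rw [algebraMap_smul S r m, ← TensorProduct.smul_tmul]
      apply h1
      rw [hσ, Algebra.smul_def, Algebra.smul_def, map_mul, hcomm, hσ])
  have hF : ∀ b m, F (b ⊗ₜ m) = π b ⊗ₜ m := fun b m => rfl
  have hG : ∀ c m, G (c ⊗ₜ m) = σ c ⊗ₜ m := fun b m => rfl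
  refine ⟨{ F with
    invFun := G
    left_inv := ?_
    right_inv := ?_ }, ?_⟩
  · intro x
    change G (F x) = x
    induction x with
    | zero => simp
    | add x y hx hy => rw [map_add, map_add, hx, hy]
    | tmul b m => rw [hF, hG]; exact h1 _ _ _ (hσ _)
  · intro x
    change F (G x) = x
    induction x with
    | zero => simp
    | add x y hx hy => rw [map_add, map_add, hx, hy]
    | tmul b m => rw [hG, hF, hσ]
  · intro b x
    change F (b • x) = π b • F x
    induction x with
    | zero => simp
    | add x y hx hy => rw [smul_add, map_add, map_add, hx, hy, smul_add]
    | tmul b' m => rw [TensorProduct.smul_tmul', hF, hF, TensorProduct.smul_tmul', smul_eq_mul, map_mul, smul_eq_mul]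

lemma aux_desc {R S B : Type u} [CommRing R] [CommRing S] [CommRing B] (φ : R →+* S)
    (hφ : Function.Surjective φ) (f : R →+* B) :
    ∃ f' : S →+* B ⧸ (RingHom.ker φ).map f, f'.comp φ = (Ideal.Quotient.mk _).comp f :=
  ⟨RingHom.liftOfSurjective φ hφ ⟨(Ideal.Quotient.mk _).comp f, fun r hr => by
    rw [RingHom.mem_ker, RingHom.comp_apply, Ideal.Quotient.eq_zero_iff_mem]
    exact Ideal.mem_map_of_mem _ hr⟩, RingHom.liftOfRightInverse_comp _ _ _ _⟩

lemma aux_loc {R S B : Type u} [CommRing R] [CommRing S] [CommRing B] [IsLocalRing B] (φ : R →+* S)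
    (hφ : Function.Surjective φ) (f : R →+* B) [hf : IsLocalHom f] (J : Ideal B) [IsLocalRing (B ⧸ J)]
    (f' : S →+* B ⧸ J) (hf' : f'.comp φ = (Ideal.Quotient.mk _).comp f) :
    IsLocalHom f' := by
  have : IsLocalHom (Ideal.Quotient.mk J) := IsLocalHom.of_surjective _ Ideal.Quotient.mk_surjective
  refine ⟨fun s hs => ?_⟩
  obtain ⟨r, rfl⟩ := hφ s
  rw [← RingHom.comp_apply, hf'] at hs
  exact (isUnit_of_map_unit f r (isUnit_of_map_unit (Ideal.Quotient.mk J) (f r) hs)).map φ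

lemma aux_reg_flat {R B : Type u} [CommRing R] [CommRing B] (f : R →+* B) (hf : f.Flat) (rs : List R)
    (reg : RingTheory.Sequence.IsWeaklyRegular R rs) :
    RingTheory.Sequence.IsWeaklyRegular B (rs.map f) := by
  let _ := f.toAlgebra
  have : Module.Flat R B := hf
  exact reg.of_flat (S := B)

lemma aux_map_span {R B : Type u} [CommRing R] [CommRing B] (f : R →+* B) (rs : List R) :
    (Ideal.span {x | x ∈ rs}).map f = Ideal.span {x | x ∈ rs.map f} :=
  Ideal.map_ofList f rs

lemma aux_ci {R S B : Type u} [CommRing R] [CommRing S] [CommRing B] [IsLocalRing R] [IsLocalRing S]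
    [IsLocalRing B] [IsNoetherianRing B] (φ : R →+* S)
    (hφ : Function.Surjective φ) (xs : List R) (xreg : RingTheory.Sequence.IsWeaklyRegular R xs)
    (hxs : Ideal.span {x | x ∈ xs} = RingHom.ker φ)
    (f : R →+* B) (hf : f.Flat) (hCI : IsCIAt R B f (maximalIdeal B))
    [IsLocalRing (B ⧸ (RingHom.ker φ).map f)]
    (f' : S →+* B ⧸ (RingHom.ker φ).map f) (hf' : f'.comp φ = (Ideal.Quotient.mk _).comp f) :
    IsCIAt S (B ⧸ (RingHom.ker φ).map f) f' (maximalIdeal _) := by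
  obtain ⟨R'', _, f2, g, ⟨hcomp, hN, ⟨hL, hAC⟩, ⟨hloc, hflat, hreg⟩, hgs, hgl⟩, ys, yreg, hys⟩ := hCI
  have : IsNoetherianRing (AdicCompletion (maximalIdeal B) B) := isNoetherianRing_of_surjective R'' _ g hgs
  obtain ⟨h, hh, hhs, hhk⟩ := aux_completion ((RingHom.ker φ).map f)
  obtain ⟨f2', hf2'⟩ := aux_desc φ hφ f2
  have hkφ : RingHom.ker φ ≤ maximalIdeal R := IsLocalRing.le_maximalIdeal (RingHom.ker_ne_top φ)
  have hmφ : (maximalIdeal R).map φ = maximalIdeal S := map_maximalIdeal_of_surjective _ hφ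
  have hK : RingHom.ker (h.comp g) = (RingHom.ker φ).map f2 ⊔ RingHom.ker g := by
    rw [← RingHom.comap_ker, hhk, Ideal.map_map, ← hcomp, ← Ideal.map_map,
      Ideal.comap_map_of_surjective' g hgs]
  have hJK : (RingHom.ker φ).map f2 ≤ RingHom.ker (h.comp g) := hK ▸ le_sup_left
  have hJ2 : (RingHom.ker φ).map f2 ≠ ⊤ := fun ht =>
    RingHom.ker_ne_top (h.comp g) (top_le_iff.mp (ht ▸ hJK))
  have hL2 : IsLocalRing (R'' ⧸ (RingHom.ker φ).map f2) := aux_isLocal hJ2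
  let g2 : R'' ⧸ (RingHom.ker φ).map f2 →+* _ := Ideal.Quotient.lift _ (h.comp g) (fun a ha => hJK ha)
  have hg2s : Function.Surjective g2 :=
    Ideal.Quotient.lift_surjective_of_surjective _ _ (hhs.comp hgs)
  have hg2k : RingHom.ker g2 = Ideal.span {x | x ∈ ys.map (Ideal.Quotient.mk ((RingHom.ker φ).map f2))} := by
    rw [Ideal.ker_quotient_lift, hK, Ideal.map_sup, Ideal.map_quotient_self, bot_sup_eq, ← hys, aux_map_span]
  refine ⟨R'' ⧸ (RingHom.ker φ).map f2, inferInstance, f2', g2, ⟨?_, inferInstance,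
    ⟨hL2, aux_adicComplete _⟩, ⟨?_, ?_, ?_⟩, hg2s, IsLocalHom.of_surjective _ hg2s⟩,
    ys.map (Ideal.Quotient.mk _), ?_, hg2k.symm⟩
  · refine (RingHom.cancel_right hφ).mp ?_
    rw [RingHom.comp_assoc, RingHom.comp_assoc, hf2', hf', ← RingHom.comp_assoc, ← RingHom.comp_assoc, ← hh]
    exact RingHom.ext fun r => congrArg h (RingHom.congr_fun hcomp r)
  · exact aux_loc φ hφ f2 _ f2' hf2'
  · exact aux_flat φ hφ f2 hflat f2' hf2'
  · have : (maximalIdeal S).map f2' = ((maximalIdeal R).map f2).map (Ideal.Quotient.mk _) := by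
      rw [← hmφ, Ideal.map_map, hf2', Ideal.map_map]
    rw [this]
    exact aux_regularLocal (DoubleQuot.quotQuotEquivQuotOfLE (Ideal.map_mono hkφ)).symm hreg
  · have hxr : RingTheory.Sequence.IsWeaklyRegular (AdicCompletion (maximalIdeal B) B)
        ((xs.map f2).map g) := by
      have hfl : (algebraMap B (AdicCompletion (maximalIdeal B) B)).Flat := by
        rw [RingHom.flat_algebraMap_iff]; infer_instance
      have := aux_reg_flat _ (RingHom.Flat.comp hf hfl) xs xreg
      rw [← hcomp] at this
      rw [List.map_map]
      exact this
    have h1 := aux_append g hgs ys (xs.map f2) yreg.toIsWeaklyRegular hys hxr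
    have h2 : RingTheory.Sequence.IsWeaklyRegular R'' (xs.map f2 ++ ys) := by
      refine IsLocalRing.isWeaklyRegular_of_perm_of_subset_maximalIdeal h1 List.perm_append_comm ?_
      intro r hr
      rcases List.mem_append.mp hr with hr | hr
      · exact aux_mem_max (RingHom.ker_ne_top g) hys r hr
      · exact aux_mem_max hJ2 (by rw [← hxs, aux_map_span]) r hr
    have h3 := aux_unappend (Ideal.Quotient.mk ((RingHom.ker φ).map f2)) Ideal.Quotient.mk_surjective
      (xs.map f2) ys h2 (by rw [Ideal.mk_ker, ← aux_map_span, hxs])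
    exact .of_isWeaklyRegular_of_mem_maximalIdeal _ (aux_mem_max (RingHom.ker_ne_top g2) hg2k.symm) h3
variable (R S M : Type u) [CommRing R] [CommRing S]
  [IsLocalRing R] [IsLocalRing S] [IsNoetherianRing R] [IsNoetherianRing S]
  [Algebra R S] [IsLocalHom (algebraMap R S)]
  [AddCommGroup M] [Module R M] [Module S M] [IsScalarTower R S M] [Module.Finite S M]

/-- Ascent of complete intersection flat dimension. -/
theorem ascent_cidimfd_of_surjective_ci (hsur : Function.Surjective (algebraMap R S))
    (hker : GeneratedByRegularSequence R (RingHom.ker (algebraMap R S)))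
    
    (hfd : HasFiniteCIQDDim R M) :
    HasFiniteCIQDDim S M := by
  obtain ⟨R', Q, _, _, hR', f, g, ⟨_, hQ, hN', hNQ, hfl, hgl, hflat, hgs, ys, yreg, hys⟩, hCI,
    ⟨n, hn⟩, -⟩ := hfd
  obtain ⟨xs, xreg, hxs⟩ := hker
  have hJ : (RingHom.ker (algebraMap R S)).map f ≠ ⊤ := by
    intro ht
    have h1 : RingHom.ker (algebraMap R S) ≤ maximalIdeal R :=
      IsLocalRing.le_maximalIdeal (RingHom.ker_ne_top _)
    have h2 := (Ideal.map_mono h1).trans (map_maximalIdeal_le f)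
    rw [ht, top_le_iff] at h2
    exact Ideal.IsPrime.ne_top' h2
  have hL : IsLocalRing (R' ⧸ (RingHom.ker (algebraMap R S)).map f) := aux_isLocal hJ
  obtain ⟨f', hf'⟩ := aux_desc (algebraMap R S) hsur f
  let π := Ideal.Quotient.mk ((RingHom.ker (algebraMap R S)).map f)
  have hπ : Function.Surjective π := Ideal.Quotient.mk_surjective
  have hgs' : Function.Surjective (π.comp g) := hπ.comp hgs
  have hgen : GeneratedByRegularSequence Q (RingHom.ker (π.comp g)) := by
    obtain ⟨zs, hzs⟩ : ∃ zs : List Q, zs.map g = xs.map f :=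
      ⟨(xs.map f).map (Function.surjInv hgs), by
        rw [List.map_map]
        conv_rhs => rw [← List.map_id (xs.map f)]
        congr 1
        funext x
        exact Function.surjInv_eq hgs x⟩
    have hspan : Ideal.span {x | x ∈ ys ++ zs} = RingHom.ker (π.comp g) := by
      have h1 : Ideal.span {x | x ∈ ys ++ zs} =
          Ideal.span {x | x ∈ ys} ⊔ Ideal.span {x | x ∈ zs} := Ideal.ofList_append ys zs
      rw [h1, ← RingHom.comap_ker, Ideal.mk_ker, ← hxs, aux_map_span, ← hzs, ← aux_map_span,
        Ideal.comap_map_of_surjective' g hgs, hys, sup_comm]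
    refine ⟨ys ++ zs, .of_isWeaklyRegular_of_mem_maximalIdeal _
      (aux_mem_max (RingHom.ker_ne_top _) hspan) ?_, hspan⟩
    refine aux_append g hgs ys zs yreg.toIsWeaklyRegular hys ?_
    rw [hzs]
    exact aux_reg_flat f hflat xs xreg.toIsWeaklyRegular
  refine ⟨R' ⧸ (RingHom.ker (algebraMap R S)).map f, Q, inferInstance, inferInstance, hL, f', π.comp g,
    ⟨hL, hQ, inferInstance, hNQ, aux_loc (algebraMap R S) hsur f _ f' hf', IsLocalHom.of_surjective _ hgs',
      aux_flat _ hsur f hflat f' hf', hgs', hgen⟩,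
    aux_ci _ hsur xs xreg.toIsWeaklyRegular hxs f hflat hCI f' hf', ?_, aux_projDimFinite _ _ _ hgs' hgen⟩
  let _ := f.toAlgebra
  let _ := f'.toAlgebra
  obtain ⟨e, he⟩ := aux_tensor (R := R) (S := S) (M := M) π hπ Ideal.mk_ker hsur
    (fun r => (RingHom.congr_fun hf' r).symm)
  let _ : Module Q (R' ⊗[R] M) := Module.compHom _ g
  let _ : Module Q ((R' ⧸ (RingHom.ker (algebraMap R S)).map f) ⊗[S] M) := Module.compHom _ (π.comp g)
  refine ⟨n, aux_flatDimLE_congr Q n _ _ { e with map_smul' := fun q x => he (g q) x } hn⟩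
end

section
/- Let φ: (R,m,k) → (S,n,ℓ) be a surjective local ring homomorphism between commutative Noetherian local rings whose kernel is generated by an R-regular sequence, and let M be a finitely generated S-module. If CI*-fd_R M < ∞, then CI*-dim_S M < ∞. -/
/-!
Common definitions: André–Quillen homology via the standard (comonad/polynomial)
simplicial resolution, complete-intersection (flat) dimensions via quasi-deformations,
Cohen factorizations, Koszul homology `H₁`, and related notions.
-/

universe u

open TensorProduct IsLocalRing

/-! ### Helper lemmas -/

theorem flatDimLE_of_equiv (Q : Type u) [CommRing Q] (n : ℕ) :
    ∀ (N N' : Type u) [AddCommGroup N] [Module Q N] [AddCommGroup N'] [Module Q N'],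
      (N ≃ₗ[Q] N') → FlatDimLE Q n N → FlatDimLE Q n N' := by
  intro N N' _ _ _ _ e h
  cases n with
  | zero =>
    have : Module.Flat Q N := h
    exact (Module.Flat.of_linearEquiv e.symm : Module.Flat Q N')
  | succ n =>
    obtain ⟨F, _, _, f, hF, hf, hk⟩ := h
    refine ⟨F, inferInstance, inferInstance, e.toLinearMap ∘ₗ f, hF,
      e.surjective.comp hf, ?_⟩
    rw [LinearEquiv.ker_comp]
    exact hk

open CategoryTheory in
theorem projDimLE_of_hasProjectiveDimensionLE (Q : Type u) [CommRing Q] (n : ℕ) :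
    ∀ (N : Type u) [AddCommGroup N] [Module Q N],
      HasProjectiveDimensionLE (ModuleCat.of Q N) n → ProjDimLE Q n N := by
  induction n with
  | zero =>
    intro N _ _ h
    rw [← projective_iff_hasProjectiveDimensionLE_zero] at h
    exact ((IsProjective.iff_projective (R := Q) (P := N)).mpr h : Module.Projective Q N)
  | succ n ih =>
    intro N _ _ h
    let f : (N →₀ Q) →ₗ[Q] N := Finsupp.linearCombination Q id
    have hf : Function.Surjective f := Finsupp.linearCombination_id_surjective Q N
    refine ⟨N →₀ Q, inferInstance, inferInstance, f, inferInstance, hf, ih _ ?_⟩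
    have hS := LinearMap.shortExact_shortComplexKer hf
    have hp : Projective (ModuleCat.of Q (N →₀ Q)) :=
      (IsProjective.iff_projective (R := Q) (P := (N →₀ Q))).mp inferInstance
    exact (hS.hasProjectiveDimensionLT_X₃_iff n hp).mp h

open CategoryTheory in
theorem projDimFinite_of_regular (Q : Type u) [CommRing Q] [IsLocalRing Q] [IsNoetherianRing Q]
    (T : Type u) [CommRing T] [Algebra Q T] (hs : Function.Surjective (algebraMap Q T))
    (h : GeneratedByRegularSequence Q (RingHom.ker (algebraMap Q T))) : ProjDimFinite Q T := by
  obtain ⟨rs, hrs, hsp⟩ := h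
  have h1 := ModuleCat.projectiveDimension_quotient_eq_length.{u} rs hrs
  have h2 : HasProjectiveDimensionLE
      (ModuleCat.of Q (Shrink.{u} (Q ⧸ Ideal.ofList rs))) rs.length := by
    rw [← projectiveDimension_le_iff, h1]
  let e1 : (Q ⧸ Ideal.ofList rs) ≃ₗ[Q] T :=
    (Submodule.quotEquivOfEq _ _ (by
      rw [Ideal.ofList, hsp]; rfl)).trans
      ((Algebra.linearMap Q T).quotKerEquivOfSurjective hs)
  let e : Shrink.{u} (Q ⧸ Ideal.ofList rs) ≃ₗ[Q] T := (Shrink.linearEquiv Q _).trans e1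
  refine ⟨rs.length, projDimLE_of_hasProjectiveDimensionLE Q _ _ ?_⟩
  exact hasProjectiveDimensionLT_of_iso e.toModuleIso _

open RingTheory.Sequence in
theorem regular_comp (Q A T : Type u) [CommRing Q] [CommRing A] [CommRing T] [Nontrivial T]
    (g : Q →+* A) (p : A →+* T) (hg : Function.Surjective g)
    (h1 : GeneratedByRegularSequence Q (RingHom.ker g))
    (xs : List A) (hxs : IsWeaklyRegular A xs) (hp : Ideal.ofList xs = RingHom.ker p) :
    GeneratedByRegularSequence Q (RingHom.ker (p.comp g)) := by
  obtain ⟨ys, hys, hy⟩ := h1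
  change Ideal.ofList ys = _ at hy
  obtain ⟨zs, rfl⟩ : ∃ zs : List Q, zs.map g = xs := by
    have := List.map_surjective_iff.mpr hg
    exact this xs
  have hspan : Ideal.ofList (ys ++ zs) = RingHom.ker (p.comp g) := by
    rw [Ideal.ofList_append, hy, ← RingHom.comap_ker, ← hp, ← Ideal.map_ofList,
      Ideal.comap_map_of_surjective g hg, sup_comm]
    rfl
  refine ⟨ys ++ zs, ⟨?_, ?_⟩, hspan⟩
  · rw [isWeaklyRegular_append_iff]
    refine ⟨hys.1, ?_⟩
    letI := g.toAlgebra
    have hz : IsWeaklyRegular A zs := (isWeaklyRegular_map_algebraMap_iff (R := Q) A A zs).mp hxs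
    let e : (Q ⧸ (Ideal.ofList ys • ⊤ : Submodule Q Q)) ≃ₗ[Q] A :=
      (Submodule.quotEquivOfEq _ _ (by
        rw [hy]; simp; rfl)).trans
        ((Algebra.linearMap Q A).quotKerEquivOfSurjective hg)
    exact (e.isWeaklyRegular_congr zs).mpr hz
  · rw [hspan, smul_eq_mul, Ideal.mul_top]
    exact (RingHom.ker_ne_top _).symm

theorem isRegularLocal_of_equiv (A B : Type u) [CommRing A] [CommRing B] (e : A ≃+* B)
    (h : IsRegularLocal A) : IsRegularLocal B := by
  obtain ⟨hn, hl, rs, hrs, hsp⟩ := h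
  haveI : IsLocalRing B := e.isLocalRing
  refine ⟨isNoetherianRing_of_ringEquiv A e, inferInstance, rs.map e, ?_, ?_⟩
  · refine (AddEquiv.isRegular_congr (e := e.toAddEquiv) ?_).mp hrs
    exact List.forall₂_map_right_iff.mpr <| List.forall₂_same.mpr fun r _ x => map_mul e r x
  · change Ideal.ofList (rs.map (e : A →+* B)) = _
    rw [← Ideal.map_ofList]
    change Ideal.map (e : A →+* B) (Ideal.span {x | x ∈ rs}) = _
    rw [hsp]
    ext x
    rw [Ideal.mem_map_iff_of_surjective (e : A →+* B) e.surjective]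
    constructor
    · rintro ⟨y, hy, rfl⟩
      rw [mem_maximalIdeal, mem_nonunits_iff] at hy ⊢
      simpa using hy
    · intro hx
      refine ⟨e.symm x, ?_, by simp⟩
      rw [mem_maximalIdeal, mem_nonunits_iff] at hx ⊢
      simpa using hx

theorem ker_includeRight_eq (R S A : Type u) [CommRing R] [CommRing S] [CommRing A]
    [Algebra R S] [Algebra R A] (hsur : Function.Surjective (algebraMap R S)) :
    RingHom.ker ((Algebra.TensorProduct.includeRight : A →ₐ[R] S ⊗[R] A) : A →+* S ⊗[R] A) =
      (RingHom.ker (algebraMap R S)).map (algebraMap R A) := by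
  have h := Algebra.TensorProduct.rTensor_ker (R := R) (S := R) (C := A) (Algebra.ofId R S) hsur
  let e : R ⊗[R] A ≃ₐ[R] A := Algebra.TensorProduct.lid R A
  have h1 : ((Algebra.TensorProduct.includeRight : A →ₐ[R] S ⊗[R] A) : A →+* S ⊗[R] A) =
      ((Algebra.TensorProduct.map (Algebra.ofId R S) (AlgHom.id R A) :
        R ⊗[R] A →ₐ[R] S ⊗[R] A) : R ⊗[R] A →+* S ⊗[R] A).comp (e.symm : A →+* R ⊗[R] A) := by
    ext a
    simp [e]
  rw [h1, ← RingHom.comap_ker]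
  change Ideal.comap _ (RingHom.ker (Algebra.TensorProduct.map (Algebra.ofId R S) (AlgHom.id R A))) = _
  rw [h]
  have h2 := Ideal.map_symm (e.symm : A ≃+* R ⊗[R] A) (I :=
    Ideal.map (Algebra.TensorProduct.includeLeft : R →ₐ[R] R ⊗[R] A) (RingHom.ker (Algebra.ofId R S)))
  refine h2.symm.trans ?_
  change Ideal.map ((e : R ⊗[R] A →+* A)) (Ideal.map ((Algebra.TensorProduct.includeLeft : R →ₐ[R] R ⊗[R] A) : R →+* R ⊗[R] A) (RingHom.ker (algebraMap R S))) = _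
  rw [Ideal.map_map]
  congr 1
  ext r
  simp [e, Algebra.algebraMap_eq_smul_one]

theorem flatDim_transfer (R S A T Q M : Type u) [CommRing R] [CommRing S] [CommRing A] [CommRing T]
    [CommRing Q] [AddCommGroup M] [Algebra R S] [Module R M] [Module S M] [IsScalarTower R S M]
    [Algebra R A] (iST : Algebra S T) [Algebra A T] [Algebra R T]
    [IsScalarTower R S T] [IsScalarTower R A T] [Algebra.IsPushout R A S T]
    (g : Q →+* A) (f' : S →+* T) (g' : Q →+* T) (hf' : f' = algebraMap S T)
    (hg' : g' = (algebraMap A T).comp g)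
    (h : letI : Module Q (A ⊗[R] M) := Module.compHom _ g
      FlatDimFinite Q (A ⊗[R] M)) :
    letI := f'.toAlgebra
    letI : Module Q (T ⊗[S] M) := Module.compHom _ g'
    FlatDimFinite Q (T ⊗[S] M) := by
  obtain rfl : iST = f'.toAlgebra := Algebra.algebra_ext _ _ fun r => by rw [hf']; rfl
  letI : Module Q (A ⊗[R] M) := Module.compHom _ g
  letI := f'.toAlgebra
  letI : Module Q (T ⊗[S] M) := Module.compHom _ g'
  obtain ⟨n, hn⟩ := h
  refine ⟨n, flatDimLE_of_equiv Q n (A ⊗[R] M) (T ⊗[S] M) ?_ hn⟩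
  let e := (Algebra.IsPushout.cancelBaseChange R A S T M).symm
  exact
    { e.toAddEquiv with
      map_smul' := fun q x => by
        change e (g q • x) = g' q • e x
        rw [map_smul, hg']
        exact (algebraMap_smul T (g q) (e x)).symm }

variable (R S M : Type u) [CommRing R] [CommRing S]
  [IsLocalRing R] [IsLocalRing S] [IsNoetherianRing R] [IsNoetherianRing S]
  [Algebra R S] [IsLocalHom (algebraMap R S)]
  [AddCommGroup M] [Module R M] [Module S M] [IsScalarTower R S M] [Module.Finite S M]

/-- Ascent of complete intersection flat dimension. -/
theorem ascent_upperCIfd_of_surjective_ci (hsur : Function.Surjective (algebraMap R S))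
    (hker : GeneratedByRegularSequence R (RingHom.ker (algebraMap R S)))
    
    (hfd : HasFiniteUpperCIDim R M) :
    HasFiniteUpperCIDim S M := by
  classical
  obtain ⟨A, Q, _, _, f, g, ⟨hlA, hlQ, hnA, hnQ, hlf, hlg, hflat, hgs, hgk⟩, ⟨-, -, hreg⟩, hfd, -⟩ :=
    hfd
  letI := f.toAlgebra
  haveI : Module.Flat R A := hflat
  let π : A →+* S ⊗[R] A :=
    ((Algebra.TensorProduct.includeRight : A →ₐ[R] S ⊗[R] A) : A →+* S ⊗[R] A)
  have hπs : Function.Surjective π := Algebra.TensorProduct.includeRight_surjective A hsur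
  have hπk : RingHom.ker π = (RingHom.ker (algebraMap R S)).map (algebraMap R A) :=
    ker_includeRight_eq R S A hsur
  have hcomm : π.comp f = (algebraMap S (S ⊗[R] A)).comp (algebraMap R S) := by
    ext r
    have h1 : π (f r) = algebraMap R (S ⊗[R] A) r :=
      (Algebra.TensorProduct.includeRight : A →ₐ[R] S ⊗[R] A).commutes r
    simpa using h1
  have hle : RingHom.ker π ≤ Ideal.map f (maximalIdeal R) := by
    rw [hπk]
    exact Ideal.map_mono (IsLocalRing.le_maximalIdeal (RingHom.ker_ne_top _))
  have hmle : Ideal.map f (maximalIdeal R) ≤ maximalIdeal A :=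
    ((IsLocalRing.local_hom_TFAE f).out 0 2).mp hlf
  haveI : Nontrivial (S ⊗[R] A) := by
    by_contra hcon
    rw [not_nontrivial_iff_subsingleton] at hcon
    have h1 : (1 : A) ∈ RingHom.ker π := Subsingleton.elim _ _
    exact (maximalIdeal.isMaximal A).ne_top
      ((Ideal.eq_top_iff_one _).mpr (hmle (hle h1)))
  haveI : IsLocalRing (S ⊗[R] A) := IsLocalRing.of_surjective' π hπs
  haveI : IsNoetherianRing (S ⊗[R] A) := isNoetherianRing_of_surjective _ _ π hπs
  haveI hπl : IsLocalHom π := IsLocalHom.of_surjective π hπs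
  haveI hf'l : IsLocalHom (algebraMap S (S ⊗[R] A)) := by
    constructor
    intro s hs
    obtain ⟨r, rfl⟩ := hsur s
    have h1 : IsUnit (π (f r)) := by
      have := congrArg (fun h : R →+* S ⊗[R] A => h r) hcomm
      simp only [RingHom.comp_apply] at this
      rwa [this]
    exact (isUnit_of_map_unit f r (isUnit_of_map_unit π _ h1)).map _
  have hf'f : (algebraMap S (S ⊗[R] A)).Flat := by
    rw [RingHom.flat_algebraMap_iff]; infer_instance
  have hm : maximalIdeal S = Ideal.map (algebraMap R S) (maximalIdeal R) := by
    rw [IsLocalRing.map_maximalIdeal_of_surjective _ hsur]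
  have hmap : Ideal.map (algebraMap S (S ⊗[R] A)) (maximalIdeal S) =
      Ideal.map π (Ideal.map f (maximalIdeal R)) := by
    rw [hm, Ideal.map_map, Ideal.map_map, hcomm]
  have hfib : IsRegularLocal
      ((S ⊗[R] A) ⧸ Ideal.map (algebraMap S (S ⊗[R] A)) (maximalIdeal S)) := by
    let p : A →+* ((S ⊗[R] A) ⧸ Ideal.map (algebraMap S (S ⊗[R] A)) (maximalIdeal S)) :=
      (Ideal.Quotient.mk _).comp π
    have hp : Function.Surjective p := Ideal.Quotient.mk_surjective.comp hπs
    have hpk : Ideal.map f (maximalIdeal R) = RingHom.ker p := by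
      rw [← RingHom.comap_ker, Ideal.mk_ker, hmap, Ideal.comap_map_of_surjective π hπs]
      exact (sup_eq_left.mpr hle).symm
    exact isRegularLocal_of_equiv _ _
      ((Ideal.quotEquivOfEq hpk).trans (RingHom.quotientKerEquivOfSurjective hp)) hreg
  have hreg2 : GeneratedByRegularSequence Q (RingHom.ker (π.comp g)) := by
    obtain ⟨rs, hrs, hsp⟩ := hker
    refine regular_comp Q A (S ⊗[R] A) g π hgs hgk (rs.map (algebraMap R A)) hrs.1.of_flat ?_
    rw [hπk, ← hsp, ← Ideal.map_ofList]
  letI : Algebra A (S ⊗[R] A) := Algebra.TensorProduct.rightAlgebra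
  refine ⟨S ⊗[R] A, Q, inferInstance, inferInstance, algebraMap S (S ⊗[R] A), π.comp g,
    ⟨inferInstance, inferInstance, inferInstance, inferInstance, hf'l,
      RingHom.isLocalHom_comp π g, hf'f, hπs.comp hgs, hreg2⟩, ⟨hf'l, hf'f, hfib⟩, ?_, ?_⟩
  · haveI : Algebra.IsPushout R A S (S ⊗[R] A) := TensorProduct.isPushout'
    exact flatDim_transfer R S A (S ⊗[R] A) Q M _ g _ _ rfl rfl hfd
  · letI := (π.comp g).toAlgebra
    exact projDimFinite_of_regular Q (S ⊗[R] A) (hπs.comp hgs) hreg2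
end

section
/- Let φ: (R,m,k) → (S,n,ℓ) be a local ring homomorphism between commutative Noetherian local rings which is essentially of finite type and complete intersection at n, and let M be a finitely generated S-module. If CI-fd_R M < ∞, then CI-dim_S M < ∞. -/
/-!
Common definitions: André–Quillen homology via the standard (comonad/polynomial)
simplicial resolution, complete-intersection (flat) dimensions via quasi-deformations,
Cohen factorizations, Koszul homology `H₁`, and related notions.
-/

universe u

open TensorProduct IsLocalRing

section
set_option linter.unusedSimpArgs false
namespace CIA
open RingTheory.Sequence
open scoped Pointwise

/-- `rs` is weakly regular on `C ⧸ L`. -/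
def WR {C : Type*} [CommRing C] : Ideal C → List C → Prop
  | _, [] => True
  | L, r :: rs => (∀ c, r * c ∈ L → c ∈ L) ∧ WR (L ⊔ Ideal.span {r}) rs

section
variable {C : Type*} [CommRing C]

def quotEquivAux (L : Ideal C) (r : C) :
    QuotSMulTop r (C ⧸ L) ≃ₗ[C] C ⧸ (L ⊔ Ideal.span {r}) :=
  Submodule.quotEquivOfEq _ _ (by
    rw [Submodule.map_pointwise_smul, Submodule.map_top, Submodule.range_mkQ]) ≪≫ₗ
  Submodule.quotientQuotientEquivQuotientSup L (r • (⊤ : Ideal C)) ≪≫ₗ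
  Submodule.quotEquivOfEq _ _ (by
    rw [← Submodule.ideal_span_singleton_smul]; simp)

theorem wr_iff (L : Ideal C) (rs : List C) : IsWeaklyRegular (C ⧸ L) rs ↔ WR L rs := by
  induction rs generalizing L with
  | nil => simp [WR]
  | cons r rs ih =>
    rw [isWeaklyRegular_cons_iff, WR, (quotEquivAux L r).isWeaklyRegular_congr, ih,
      isSMulRegular_quotient_iff_mem_of_smul_mem]
    rfl

theorem wr_bot_iff (rs : List C) : IsWeaklyRegular C rs ↔ WR (⊥ : Ideal C) rs := by
  rw [← wr_iff, (Submodule.quotEquivOfEqBot (⊥ : Ideal C) rfl).isWeaklyRegular_congr]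

theorem wr_append {L : Ideal C} {as bs : List C} :
    WR L (as ++ bs) ↔ WR L as ∧ WR (L ⊔ Ideal.ofList as) bs := by
  induction as generalizing L with
  | nil => simp [WR]
  | cons a as ih => simp only [List.cons_append, WR, ih, Ideal.ofList_cons, sup_assoc, and_assoc]

theorem wr_perm [IsLocalRing C] [IsNoetherianRing C] {L : Ideal C} {as bs : List C}
    (h : WR L as) (hp : as.Perm bs) (hm : ∀ r ∈ as, r ∈ maximalIdeal C) : WR L bs := by
  rw [← wr_iff] at h ⊢
  exact IsLocalRing.isWeaklyRegular_of_perm_of_subset_maximalIdeal h hp hm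

theorem ofList_perm {as bs : List C} (hp : as.Perm bs) : Ideal.ofList as = Ideal.ofList bs := by
  unfold Ideal.ofList; congr 1; ext x; exact hp.mem_iff

theorem ofList_le {as : List C} {J : Ideal C} : Ideal.ofList as ≤ J ↔ ∀ a ∈ as, a ∈ J := by
  rw [Ideal.ofList, Ideal.span_le]; rfl

theorem mem_ofList {as : List C} {a : C} (h : a ∈ as) : a ∈ Ideal.ofList as :=
  Ideal.subset_span h

/-- replace the last element -/
theorem wr_last {L : Ideal C} {as : List C} {x y u : C} (hu : IsUnit u)
    (h : WR L (as ++ [x])) (hy : y - u * x ∈ L ⊔ Ideal.ofList as) : WR L (as ++ [y]) := by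
  rw [wr_append] at h ⊢
  refine ⟨h.1, ?_, trivial⟩
  intro c hc
  apply h.2.1 c
  rw [← Ideal.unit_mul_mem_iff_mem _ hu]
  have := sub_mem hc (Ideal.mul_mem_left _ c hy)
  convert this using 1; ring

theorem sup_span_exchange {L : Ideal C} {x y u : C} (hu : IsUnit u)
    (hy : y - u * x ∈ L) : L ⊔ Ideal.span {y} = L ⊔ Ideal.span {x} := by
  obtain ⟨u, rfl⟩ := hu
  apply le_antisymm
  · refine sup_le le_sup_left ((Ideal.span_singleton_le_iff_mem _).2 ?_)
    have : y = (y - u * x) + u * x := by ring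
    rw [this]
    exact add_mem (Ideal.mem_sup_left hy)
      (Ideal.mem_sup_right (Ideal.mul_mem_left _ _ (Ideal.mem_span_singleton_self x)))
  · refine sup_le le_sup_left ((Ideal.span_singleton_le_iff_mem _).2 ?_)
    have : x = (-↑u⁻¹) * (y - u * x) + ↑u⁻¹ * y := by
      have := u.inv_mul; linear_combination (-x) * this
    rw [this]
    exact add_mem (Ideal.mem_sup_left (Ideal.mul_mem_left _ _ hy))
      (Ideal.mem_sup_right (Ideal.mul_mem_left _ _ (Ideal.mem_span_singleton_self y)))

theorem wr_surj {D : Type*} [CommRing D] (τ : C →+* D) (hτ : Function.Surjective τ)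
    (L : Ideal D) (rs : List C) : WR L (rs.map τ) ↔ WR (L.comap τ) rs := by
  induction rs generalizing L with
  | nil => simp [WR]
  | cons r rs ih =>
    simp only [List.map_cons, WR, ih]
    have : Ideal.comap τ (L ⊔ Ideal.span {τ r}) = Ideal.comap τ L ⊔ Ideal.span {r} := by
      have h : L ⊔ Ideal.span {τ r} = Ideal.map τ (Ideal.comap τ L ⊔ Ideal.span {r}) := by
        rw [Ideal.map_sup, Ideal.map_comap_of_surjective τ hτ, Ideal.map_span, Set.image_singleton]
      rw [h, Ideal.comap_map_of_surjective τ hτ, sup_eq_left]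
      exact le_sup_of_le_left (Ideal.comap_mono bot_le)
    rw [this]
    refine and_congr_left fun _ => ⟨fun h c hc => h _ (by simpa using hc), fun h d hd => ?_⟩
    obtain ⟨c, rfl⟩ := hτ d
    exact h c (by simpa using hd)

/-- Lemma W -/
theorem wr_inf {L : Ideal C} {zs : List C} (h : WR L zs) :
    Ideal.ofList zs ⊓ L ≤ Ideal.ofList zs * L := by
  induction zs using List.reverseRecOn with
  | nil => simp
  | append_singleton zs z ih =>
    rw [wr_append] at h
    have ih := ih h.1
    intro x hx
    obtain ⟨hx1, hx2⟩ := hx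
    simp only [Ideal.ofList_append, Ideal.ofList_singleton] at hx1 ⊢
    obtain ⟨a, ha, b, hb, rfl⟩ := Submodule.mem_sup.1 hx1
    obtain ⟨c, rfl⟩ := Ideal.mem_span_singleton'.1 hb
    have hc : c ∈ L ⊔ Ideal.ofList zs := by
      apply h.2.1
      have := sub_mem (Ideal.mem_sup_left hx2 : _ ∈ L ⊔ Ideal.ofList zs) (Ideal.mem_sup_right ha)
      convert this using 1; ring
    obtain ⟨l, hl, e, he, rfl⟩ := Submodule.mem_sup.1 hc
    have h1 : a + e * z ∈ Ideal.ofList zs ⊓ L := by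
      refine ⟨add_mem ha (Ideal.mul_mem_right _ _ he), ?_⟩
      have h5 := sub_mem hx2 (Ideal.mul_mem_right z _ hl)
      have h6 : a + (l + e) * z - l * z = a + e * z := by ring
      rw [h6] at h5
      exact h5
    have h2 := ih h1
    have : a + (l + e) * z = (a + e * z) + z * l := by ring
    rw [this, Ideal.sup_mul]
    exact add_mem (Ideal.mem_sup_left h2) (Ideal.mem_sup_right
      (Ideal.mul_mem_mul (Ideal.mem_span_singleton_self z) hl))

/-- colon lemma -/
theorem wr_colon {L N : Ideal C} {t : C} {fs : List C} (hLN : ∀ c, t * c ∈ L ↔ c ∈ N)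
    (h1 : WR N fs) (h2 : WR (L ⊔ Ideal.span {t}) fs) : WR L fs := by
  induction fs generalizing L N with
  | nil => trivial
  | cons r fs ih =>
    have hreg : ∀ c, r * c ∈ L → c ∈ L := by
      intro c hc
      have hc' := h2.1 c (Ideal.mem_sup_left hc)
      obtain ⟨l, hl, b, hb, rfl⟩ := Submodule.mem_sup.1 hc'
      obtain ⟨d, rfl⟩ := Ideal.mem_span_singleton'.1 hb
      have : t * (r * d) ∈ L := by
        have := sub_mem hc (Ideal.mul_mem_left _ r hl)
        convert this using 1; ring
      have := (hLN d).2 (h1.1 d ((hLN _).1 this))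
      exact add_mem hl (by rwa [mul_comm])
    refine ⟨hreg, ih (N := N ⊔ Ideal.span {r}) ?_ h1.2 ?_⟩
    · intro c
      constructor
      · intro hc
        obtain ⟨l, hl, b, hb, e⟩ := Submodule.mem_sup.1 hc
        obtain ⟨d, rfl⟩ := Ideal.mem_span_singleton'.1 hb
        -- l + d r = t c ;
        have hd : d ∈ L ⊔ Ideal.span {t} := h2.1 d (by
          have : r * d = (-1) * l + c * t := by linear_combination e
          rw [this]
          exact add_mem (Ideal.mem_sup_left (Ideal.mul_mem_left _ _ hl))
            (Ideal.mem_sup_right (Ideal.mul_mem_left _ _ (Ideal.mem_span_singleton_self t))))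
        obtain ⟨l', hl', b', hb', rfl⟩ := Submodule.mem_sup.1 hd
        obtain ⟨d', rfl⟩ := Ideal.mem_span_singleton'.1 hb'
        have : c - r * d' ∈ N := by
          rw [← hLN]
          have := add_mem hl (Ideal.mul_mem_right r _ hl')
          convert this using 1; linear_combination -e
        have h3 : c = (c - r * d') + d' * r := by ring
        rw [h3]
        exact add_mem (Ideal.mem_sup_left this) (Ideal.mem_sup_right
          (Ideal.mul_mem_left _ _ (Ideal.mem_span_singleton_self r)))
      · intro hc
        obtain ⟨l, hl, b, hb, rfl⟩ := Submodule.mem_sup.1 hc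
        obtain ⟨d, rfl⟩ := Ideal.mem_span_singleton'.1 hb
        have : t * (l + d * r) = t * l + (t * d) * r := by ring
        rw [this]
        exact add_mem (Ideal.mem_sup_left ((hLN l).2 hl)) (Ideal.mem_sup_right
          (Ideal.mul_mem_left _ _ (Ideal.mem_span_singleton_self r)))
    · have := h2.2
      rwa [sup_right_comm] at this
end

section flat
variable {P C : Type*} [CommRing P] [CommRing C] [Algebra P C]

theorem flat_colon [Module.Flat P C] {L N : Ideal P} {t : P}
    (h : ∀ c, t * c ∈ L → c ∈ N) (d : C)
    (hd : algebraMap P C t * d ∈ L.map (algebraMap P C)) : d ∈ N.map (algebraMap P C) := by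
  obtain ⟨n, f, g, e⟩ := Submodule.mem_span_set'.1 hd
  have hg : ∀ i, ∃ l ∈ L, algebraMap P C l = g i := fun i => (g i).2
  choose l hl hlg using hg
  have rel : ∑ i : Option (Fin n), (i.elim t (fun i => - l i)) • (i.elim d f) = 0 := by
    rw [Fintype.sum_option]
    simp only [Option.elim_none, Option.elim_some, Algebra.smul_def, map_neg, neg_mul,
      Finset.sum_neg_distrib, hlg]
    rw [← e, add_neg_eq_zero]
    exact Finset.sum_congr rfl fun i _ => mul_comm _ _
  obtain ⟨κ, a, y, h1, h2⟩ := Module.Flat.isTrivialRelation_of_sum_smul_eq_zero (R := P) (M := C) rel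
  have := h1 none
  simp only [Option.elim] at this
  rw [this]
  refine sum_mem fun j _ => ?_
  rw [Algebra.smul_def]
  refine Ideal.mul_mem_right _ _ (Ideal.mem_map_of_mem _ (h _ ?_))
  have := h2 j
  rw [Fintype.sum_option] at this
  simp only [Option.elim, smul_eq_mul, neg_mul, Finset.sum_neg_distrib] at this
  rw [add_neg_eq_zero] at this
  rw [this]
  exact sum_mem fun i _ => Ideal.mul_mem_right _ _ (hl i)

theorem wr_map_flat [Module.Flat P C] {L : Ideal P} {rs : List P} (h : WR L rs) :
    WR (L.map (algebraMap P C)) (rs.map (algebraMap P C)) := by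
  induction rs generalizing L with
  | nil => trivial
  | cons r rs ih =>
    refine ⟨flat_colon h.1, ?_⟩
    have := ih h.2
    rwa [Ideal.map_sup, Ideal.map_span, Set.image_singleton] at this

theorem wr_of_map_faithfullyFlat [Module.FaithfullyFlat P C] {L : Ideal P} {rs : List P}
    (h : WR (L.map (algebraMap P C)) (rs.map (algebraMap P C))) : WR L rs := by
  induction rs generalizing L with
  | nil => trivial
  | cons r rs ih =>
    refine ⟨fun c hc => ?_, ih ?_⟩
    · rw [← Ideal.comap_map_eq_self_of_faithfullyFlat (B := C) L]
      exact h.1 _ (by rw [← map_mul]; exact Ideal.mem_map_of_mem _ hc)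
    · rw [Ideal.map_sup, Ideal.map_span, Set.image_singleton]
      exact h.2

theorem flat_quot_inf {K : Ideal C} [Module.Flat P (C ⧸ K)] (𝔞 : Ideal P) :
    K ⊓ 𝔞.map (algebraMap P C) ≤ 𝔞.map (algebraMap P C) * K := by
  rintro x ⟨hx, hx'⟩
  obtain ⟨n, f, g, e⟩ := Submodule.mem_span_set'.1 hx'
  have hg : ∀ i, ∃ l ∈ 𝔞, algebraMap P C l = g i := fun i => (g i).2
  choose l hl hlg using hg
  have rel : ∑ i : Fin n, l i • (Ideal.Quotient.mk K (f i)) = 0 := by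
    have : ∑ i : Fin n, l i • (Ideal.Quotient.mk K (f i)) = Ideal.Quotient.mk K x := by
      rw [← e, map_sum]
      refine Finset.sum_congr rfl fun i _ => ?_
      rw [smul_eq_mul, map_mul, ← hlg, Algebra.smul_def, mul_comm]; rfl
    rw [this]; exact Ideal.Quotient.eq_zero_iff_mem.2 hx
  obtain ⟨κ, a, y, h1, h2⟩ := Module.Flat.isTrivialRelation_of_sum_smul_eq_zero
    (R := P) (M := C ⧸ K) rel
  choose y' hy' using fun j => Ideal.Quotient.mk_surjective (I := K) (y j)
  have key : x = ∑ i, algebraMap P C (l i) * (f i - ∑ j, algebraMap P C (a i j) * y' j) := by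
    simp only [mul_sub, Finset.mul_sum, Finset.sum_sub_distrib]
    rw [Finset.sum_comm]
    have : ∀ j, ∑ i, algebraMap P C (l i) * (algebraMap P C (a i j) * y' j) = 0 := fun j => by
      simp only [← mul_assoc, ← map_mul, ← Finset.sum_mul, ← map_sum]
      have := h2 j
      rw [this]; simp
    simp only [this, Finset.sum_const_zero, sub_zero]
    rw [← e]; refine Finset.sum_congr rfl fun i _ => ?_
    rw [hlg, smul_eq_mul, mul_comm]
  rw [key]
  refine sum_mem fun i _ => Ideal.mul_mem_mul (Ideal.mem_map_of_mem _ (hl i)) ?_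
  rw [← Ideal.Quotient.eq_zero_iff_mem, map_sub, map_sum, sub_eq_zero, show Ideal.Quotient.mk K (f i) = _ from h1 i]
  refine Finset.sum_congr rfl fun j _ => ?_
  rw [map_mul, hy', Algebra.smul_def]; rfl

end flat
end CIA
end

section
set_option linter.unusedSectionVars false
namespace CIA

section
variable {C : Type*} [CommRing C] [IsLocalRing C] [IsNoetherianRing C]

theorem exchange {𝔪 : Ideal C} {ys xs : List C} {x y u : C} (hu : IsUnit u)
    (hm : ∀ r ∈ ys ++ x :: xs, r ∈ maximalIdeal C) (hym : y ∈ maximalIdeal C)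
    (h : WR 𝔪 (ys ++ x :: xs)) (hy : y - u * x ∈ 𝔪 ⊔ Ideal.ofList (ys ++ xs)) :
    WR 𝔪 (ys ++ y :: xs) ∧
      𝔪 ⊔ Ideal.ofList (ys ++ y :: xs) = 𝔪 ⊔ Ideal.ofList (ys ++ x :: xs) := by
  have hp : ∀ z, (ys ++ z :: xs).Perm ((ys ++ xs) ++ [z]) := fun z =>
    (List.perm_middle).trans (List.perm_append_singleton z _).symm
  have h1 := wr_perm h (hp x) hm
  have h2 := wr_last hu h1 hy
  constructor
  · refine wr_perm h2 (hp y).symm ?_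
    intro r hr
    rw [List.mem_append] at hr
    rcases hr with hr | hr
    · apply hm; simp only [List.mem_append, List.mem_cons] at hr ⊢; tauto
    · simp at hr; rwa [hr]
  · rw [ofList_perm (hp y), ofList_perm (hp x), Ideal.ofList_append _ [y],
      Ideal.ofList_append _ [x], Ideal.ofList_singleton, Ideal.ofList_singleton,
      ← sup_assoc, ← sup_assoc, sup_span_exchange hu hy]

theorem mem_ofList_split {xs : List C} {a : C} (h : a ∈ Ideal.ofList xs) :
    a ∈ maximalIdeal C * Ideal.ofList xs ∨
    ∃ xs1 x xs2 u, xs = xs1 ++ x :: xs2 ∧ IsUnit u ∧ a - u * x ∈ Ideal.ofList (xs1 ++ xs2) := by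
  induction xs generalizing a with
  | nil => left; simpa using h
  | cons x xs ih =>
    rw [Ideal.ofList_cons] at h
    obtain ⟨b, hb, c, hc, rfl⟩ := Submodule.mem_sup.1 h
    obtain ⟨d, rfl⟩ := Ideal.mem_span_singleton'.1 hb
    by_cases hd : IsUnit d
    · right; exact ⟨[], x, xs, d, rfl, hd, by simpa using hc⟩
    · rcases ih hc with h1 | ⟨xs1, x', xs2, u, rfl, hu, h1⟩
      · left
        rw [Ideal.ofList_cons, Ideal.mul_sup]
        exact add_mem (Ideal.mem_sup_left (Ideal.mul_mem_mul hd (Ideal.mem_span_singleton_self x)))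
          (Ideal.mem_sup_right h1)
      · right
        refine ⟨x :: xs1, x', xs2, u, rfl, hu, ?_⟩
        rw [List.cons_append, Ideal.ofList_cons, add_sub_assoc]
        exact add_mem (Ideal.mem_sup_left hb) (Ideal.mem_sup_right h1)

theorem exists_sublist {𝔪 J : Ideal C} (hJ : J ≤ maximalIdeal C) (gs : List C)
    (hgs : ∀ g ∈ gs, g ∈ J) (ys xs : List C) (h : WR 𝔪 (ys ++ xs))
    (hx : 𝔪 ⊔ Ideal.ofList (ys ++ xs) = J) :
    ∃ gs' xs', gs'.Sublist gs ∧ WR 𝔪 (ys ++ gs' ++ xs') ∧ 𝔪 ⊔ Ideal.ofList (ys ++ gs' ++ xs') = J ∧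
      ∀ g ∈ gs, g ∈ 𝔪 ⊔ Ideal.ofList (ys ++ gs') ⊔ maximalIdeal C * J := by
  induction gs generalizing ys xs with
  | nil => exact ⟨[], xs, List.Sublist.refl _, by simpa using h, by simpa using hx, by simp⟩
  | cons g gs ih =>
    have hg : g ∈ J := hgs g (by simp)
    have hmem : ∀ r ∈ ys ++ xs, r ∈ maximalIdeal C := fun r hr =>
      hJ (hx ▸ Ideal.mem_sup_right (mem_ofList hr))
    have key : g ∈ 𝔪 ⊔ Ideal.ofList ys ⊔ maximalIdeal C * J ∨
        ∃ xs1 x xs2 u, xs = xs1 ++ x :: xs2 ∧ IsUnit u ∧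
          g - u * x ∈ 𝔪 ⊔ Ideal.ofList (ys ++ (xs1 ++ xs2)) := by
      rw [← hx, Ideal.ofList_append, ← sup_assoc] at hg
      obtain ⟨b, hb, c, hc, rfl⟩ := Submodule.mem_sup.1 hg
      rcases mem_ofList_split hc with h1 | ⟨xs1, x, xs2, u, rfl, hu, h1⟩
      · left
        refine add_mem (Ideal.mem_sup_left hb) (Ideal.mem_sup_right ?_)
        refine Ideal.mul_mono_right ?_ h1
        rw [← hx, Ideal.ofList_append, ← sup_assoc]
        exact le_sup_right
      · right
        refine ⟨xs1, x, xs2, u, rfl, hu, ?_⟩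
        rw [Ideal.ofList_append, ← sup_assoc, add_sub_assoc]
        exact add_mem (Ideal.mem_sup_left hb) (Ideal.mem_sup_right h1)
    rcases key with h1 | ⟨xs1, x, xs2, u, rfl, hu, h1⟩
    · obtain ⟨gs', xs', a, b, c, d⟩ := ih (fun g hg => hgs g (by simp [hg])) ys xs h hx
      refine ⟨gs', xs', a.cons g, b, c, ?_⟩
      intro g' hg'
      rcases List.mem_cons.1 hg' with rfl | hg'
      · have h9 : 𝔪 ⊔ Ideal.ofList ys ⊔ maximalIdeal C * J ≤
            𝔪 ⊔ Ideal.ofList (ys ++ gs') ⊔ maximalIdeal C * J :=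
          sup_le_sup_right (sup_le_sup_left
            (by rw [Ideal.ofList_append]; exact le_sup_left) _) _
        exact h9 h1
      · exact d g' hg'
    · have e := exchange (ys := ys ++ xs1) (xs := xs2) hu (by simpa using hmem) (hJ hg)
        (by simpa using h) (by simpa using h1)
      have hp : ((ys ++ xs1) ++ g :: xs2).Perm ((ys ++ [g]) ++ (xs1 ++ xs2)) := by
        simp only [List.append_assoc]
        refine List.Perm.append_left _ ?_
        exact List.perm_middle
      have hJ2 : 𝔪 ⊔ Ideal.ofList (ys ++ xs1 ++ g :: xs2) = J := by
        rw [e.2, ← hx, List.append_assoc]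
      have hWR := wr_perm e.1 hp (fun r hr => hJ (hJ2 ▸ Ideal.mem_sup_right (mem_ofList hr)))
      rw [ofList_perm hp] at hJ2
      obtain ⟨gs', xs', a, b, c, d⟩ := ih (fun g hg => hgs g (by simp [hg])) (ys ++ [g])
        (xs1 ++ xs2) hWR hJ2
      refine ⟨g :: gs', xs', a.cons_cons g, by simpa using b, by simpa using c, ?_⟩
      intro g' hg'
      rcases List.mem_cons.1 hg' with rfl | hg'
      · exact Ideal.mem_sup_left (Ideal.mem_sup_right (mem_ofList (by simp)))
      · simpa using d g' hg'

/-- GH' -/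
theorem exists_sublist_gen {𝔪 J : Ideal C} (hJ : J ≤ maximalIdeal C) (gs : List C)
    (hgJ : 𝔪 ⊔ Ideal.ofList gs = J) (xs : List C) (h : WR 𝔪 xs)
    (hx : 𝔪 ⊔ Ideal.ofList xs = J) :
    ∃ gs', gs'.Sublist gs ∧ WR 𝔪 gs' ∧ 𝔪 ⊔ Ideal.ofList gs' = J := by
  obtain ⟨gs', xs', a, b, c, d⟩ := exists_sublist hJ gs
    (fun g hg => hgJ ▸ Ideal.mem_sup_right (mem_ofList hg)) [] xs h hx
  simp only [List.nil_append] at b c d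
  refine ⟨gs', a, (wr_append.1 b).1, le_antisymm ?_ ?_⟩
  · rw [← c, Ideal.ofList_append, ← sup_assoc]; exact le_sup_left
  · have : J ≤ (𝔪 ⊔ Ideal.ofList gs') ⊔ maximalIdeal C • J := by
      conv_lhs => rw [← hgJ]
      refine sup_le (le_sup_of_le_left le_sup_left) (ofList_le.2 d)
    exact Submodule.le_of_le_smul_of_le_jacobson_bot (IsNoetherian.noetherian J)
      (IsLocalRing.maximalIdeal_le_jacobson _) this

variable {R : Type*} [CommRing R] [IsLocalRing R] [IsNoetherianRing R] [Algebra R C]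
  [Module.Flat R C]

theorem wr_pow {fs : List C} (h : WR ((maximalIdeal R).map (algebraMap R C)) fs) (n : ℕ)
    (𝔞 : Ideal R) (hn : maximalIdeal R ^ n ≤ 𝔞) : WR (𝔞.map (algebraMap R C)) fs := by
  induction 𝔞 using WellFoundedGT.induction with
  | ind 𝔞 ih =>
    by_cases htop : 𝔞 = ⊤
    · have ht : ∀ fs : List C, WR (⊤ : Ideal C) fs := by
        intro fs
        induction fs with
        | nil => trivial
        | cons r rs ih => exact ⟨fun c _ => trivial, by rwa [top_sup_eq]⟩
      rw [htop, Ideal.map_top]; exact ht _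
    -- choose t with t m ≤ 𝔞, t ∉ 𝔞
    have : ∃ t, t ∉ 𝔞 ∧ ∀ c ∈ maximalIdeal R, t * c ∈ 𝔞 := by
      clear ih h
      induction n with
      | zero => exact absurd (by simpa using hn) htop
      | succ n ihn =>
        by_cases h1 : maximalIdeal R ^ n ≤ 𝔞
        · exact ihn h1
        · obtain ⟨t, ht, ht'⟩ := Set.not_subset.1 h1
          exact ⟨t, ht', fun c hc => hn (by rw [pow_succ]; exact Ideal.mul_mem_mul ht hc)⟩
    obtain ⟨t, ht, htm⟩ := this
    have h2 := ih (𝔞 ⊔ Ideal.span {t}) (by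
      refine lt_of_le_of_ne le_sup_left fun e => ht ?_
      rw [e]; exact Ideal.mem_sup_right (Ideal.mem_span_singleton_self t)) (le_sup_of_le_left hn)
    rw [Ideal.map_sup, Ideal.map_span, Set.image_singleton] at h2
    refine wr_colon (N := (maximalIdeal R).map (algebraMap R C)) (t := algebraMap R C t) ?_ h h2
    intro c
    constructor
    · intro hc
      refine flat_colon (P := R) (L := 𝔞) ?_ c hc
      intro c hc
      by_contra hcu
      have hcu : IsUnit c := by simpa using hcu
      exact ht ((Ideal.mul_unit_mem_iff_mem _ hcu).1 hc)
    · intro hc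
      have : (maximalIdeal R).map (algebraMap R C) ≤
          Submodule.comap (LinearMap.mulLeft C (algebraMap R C t)) (𝔞.map (algebraMap R C)) := by
        rw [Ideal.map_le_iff_le_comap]
        intro r hr
        change algebraMap R C t * algebraMap R C r ∈ 𝔞.map (algebraMap R C)
        rw [← map_mul]
        exact Ideal.mem_map_of_mem _ (htm r hr)
      exact this hc

/-- Lemma F -/
theorem wr_bot_of_fiber [IsLocalHom (algebraMap R C)] {fs : List C}
    (hm : ∀ r ∈ fs, r ∈ maximalIdeal C)
    (h : WR ((maximalIdeal R).map (algebraMap R C)) fs) : WR (⊥ : Ideal C) fs := by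
  have hle : (maximalIdeal R).map (algebraMap R C) ≤ maximalIdeal C :=
    ((IsLocalRing.local_hom_TFAE (algebraMap R C)).out 0 2).1 (by infer_instance)
  have hn : ∀ n : ℕ, WR (((maximalIdeal R).map (algebraMap R C)) ^ n) fs := fun n => by
    rw [← Ideal.map_pow]; exact wr_pow h n _ le_rfl
  generalize (maximalIdeal R).map (algebraMap R C) = 𝔪 at hn hle
  -- general L
  suffices H : ∀ (fs : List C) (L : Ideal C), L ≤ maximalIdeal C →
      (∀ r ∈ fs, r ∈ maximalIdeal C) → (∀ n, WR (L ⊔ 𝔪 ^ n) fs) → WR L fs from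
    H fs ⊥ bot_le hm (by simpa using hn)
  clear hn h hm fs
  intro fs
  induction fs with
  | nil => intros; trivial
  | cons r fs ih =>
    intro L hL hm hn
    refine ⟨fun c hc => ?_, ih _ (sup_le hL ?_) (fun r hr => hm r (by simp [hr])) fun n => ?_⟩
    · have h1 : ∀ n, c ∈ L ⊔ 𝔪 ^ n := fun n => (hn n).1 c (Ideal.mem_sup_left hc)
      have h2 : Ideal.Quotient.mk L c ∈ (⨅ n, 𝔪 ^ n • (⊤ : Submodule C (C ⧸ L))) := by
        rw [Submodule.mem_iInf]
        intro n
        obtain ⟨a, ha, b, hb, rfl⟩ := Submodule.mem_sup.1 (h1 n)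
        rw [map_add, Ideal.Quotient.eq_zero_iff_mem.2 ha, zero_add]
        have : Ideal.Quotient.mk L b = b • (1 : C ⧸ L) := by
          rw [Algebra.smul_def]; simp
        rw [this]
        exact Submodule.smul_mem_smul hb trivial
      rw [Ideal.iInf_pow_smul_eq_bot_of_isLocalRing] at h2
      · exact Ideal.Quotient.eq_zero_iff_mem.1 (by simpa using h2)
      · intro e; rw [e] at hle; exact (maximalIdeal.isMaximal C).ne_top (top_le_iff.1 hle)
    · rw [Ideal.span_singleton_le_iff_mem]; exact hm r (by simp)
    · have := (hn n).2
      rwa [sup_right_comm] at this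

end
end CIA
end

section
set_option linter.style.haveILetI false
set_option linter.unusedSectionVars false
namespace CIA

theorem exists_ps_hom {P A : Type*} [CommRing P] [CommRing A] (φ : P →+* A) (𝔫 : Ideal A)
    [hc : IsAdicComplete 𝔫 A] {n : ℕ} (a : Fin n → A) (ha : ∀ i, a i ∈ 𝔫) :
    ∃ F : MvPowerSeries (Fin n) P →+* A, (∀ p, F (MvPowerSeries.C p) = φ p) ∧
      ∀ i, F (MvPowerSeries.X i) = a i := by
  letI : WithIdeal A := ⟨𝔫⟩
  letI : UniformSpace P := ⊥
  haveI : DiscreteUniformity P := ⟨rfl⟩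
  have hadic : IsAdic 𝔫 := rfl
  have h2 := hadic.isAdicComplete_iff.1 hc
  haveI := h2.1
  haveI := h2.2
  have hφ : Continuous φ := continuous_of_discreteTopology
  have hE : MvPowerSeries.HasEval a :=
    ⟨fun i => WithIdeal.isTopologicallyNilpotent_of_mem (ha i), by simp⟩
  refine ⟨MvPowerSeries.eval₂Hom hφ hE, fun p => ?_, fun i => ?_⟩
  · rw [MvPowerSeries.coe_eval₂Hom]; simp
  · rw [MvPowerSeries.coe_eval₂Hom]; simp

theorem noetherian_of_complete {P A : Type*} [CommRing P] [CommRing A] [IsNoetherianRing P]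
    (φ : P →+* A) (I : Ideal P) [hc : IsAdicComplete (I.map φ) A]
    (hs : ∀ x, ∃ p, x - φ p ∈ I.map φ) : IsNoetherianRing A := by
  obtain ⟨n, a, ha⟩ := Submodule.fg_iff_exists_fin_generating_family.1 (IsNoetherian.noetherian I)
  obtain ⟨F, hF1, hF2⟩ := exists_ps_hom φ (I.map φ) (fun i => φ (a i))
    (fun i => Ideal.mem_map_of_mem _ (ha ▸ Submodule.subset_span ⟨i, rfl⟩))
  have hmap : (Ideal.span (Set.range MvPowerSeries.X) : Ideal (MvPowerSeries (Fin n) P)).map F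
      = I.map φ := by
    rw [Ideal.map_span, ← Set.range_comp, ← ha]
    change _ = Ideal.map φ (Ideal.span _)
    rw [Ideal.map_span, ← Set.range_comp]
    congr 2; ext i; exact hF2 i
  have hsurj : Function.Surjective F := by
    haveI : IsHausdorff ((Ideal.span (Set.range MvPowerSeries.X) :
      Ideal (MvPowerSeries (Fin n) P)).map F) A := by rw [hmap]; infer_instance
    refine surjective_of_mk_map_comp_surjective (I := Ideal.span (Set.range MvPowerSeries.X)) F ?_
    intro y
    obtain ⟨x, rfl⟩ := Ideal.Quotient.mk_surjective y
    obtain ⟨p, hp⟩ := hs x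
    refine ⟨MvPowerSeries.C p, ?_⟩
    rw [RingHom.comp_apply, hF1, eq_comm, Ideal.Quotient.eq, hmap]
    exact hp
  exact isNoetherianRing_of_surjective _ _ F hsurj

theorem exists_completion (P : Type u) [CommRing P] [IsLocalRing P] [IsNoetherianRing P] :
    ∃ (C : Type u) (_ : CommRing C) (_ : Algebra P C) (_ : IsLocalRing C),
      IsNoetherianRing C ∧ Module.FaithfullyFlat P C ∧ IsLocalHom (algebraMap P C) ∧
      (maximalIdeal P).map (algebraMap P C) = maximalIdeal C ∧
      IsAdicComplete (maximalIdeal C) C ∧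
      (∀ c, ∃ p, c - algebraMap P C p ∈ maximalIdeal C) ∧
      (∀ (A : Type u) [CommRing A] (𝔫 : Ideal A) [IsAdicComplete 𝔫 A] (σ : P →+* A),
        (maximalIdeal P).map σ ≤ 𝔫 → ∃ τ : C →+* A, τ.comp (algebraMap P C) = σ) := by
  have hmax := AdicCompletion.maximalIdeal_eq_map (R := P)
  have hres : ∀ c : AdicCompletion (maximalIdeal P) P, ∃ p,
      c - algebraMap P _ p ∈ maximalIdeal (AdicCompletion (maximalIdeal P) P) := by
    intro c
    obtain ⟨p, hp⟩ := Ideal.Quotient.mk_surjective (AdicCompletion.evalOneₐ (maximalIdeal P) c)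
    refine ⟨p, ?_⟩
    rw [hmax, ← AdicCompletion.ker_evalOneₐ_eq_map _ (IsNoetherian.noetherian _), RingHom.mem_ker,
      map_sub, sub_eq_zero]
    refine hp.symm.trans ?_
    exact ((AdicCompletion.evalOneₐ (maximalIdeal P)).commutes p).symm
  refine ⟨AdicCompletion (maximalIdeal P) P, inferInstance, inferInstance, inferInstance,
    ?_, ?_, inferInstance, hmax.symm, inferInstance, hres, ?_⟩
  · haveI : IsAdicComplete ((maximalIdeal P).map (algebraMap P _))
      (AdicCompletion (maximalIdeal P) P) := by rw [← hmax]; infer_instance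
    exact noetherian_of_complete (algebraMap P _) (maximalIdeal P) (by rw [← hmax]; exact hres)
  · exact Module.FaithfullyFlat.of_flat_of_isLocalHom
  · intro A _ 𝔫 _ σ hσ
    have hle : ∀ n : ℕ, maximalIdeal P ^ n ≤ (𝔫 ^ n).comap σ := fun n => by
      rw [← Ideal.map_le_iff_le_comap, Ideal.map_pow]
      exact Ideal.pow_right_mono hσ n
    let f : (n : ℕ) → AdicCompletion (maximalIdeal P) P →+* A ⧸ 𝔫 ^ n := fun n =>
      (Ideal.quotientMap (𝔫 ^ n) σ (hle n)).comp
        (AdicCompletion.evalₐ (maximalIdeal P) n : _ →+* _)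
    have hcompat : ∀ {m n : ℕ} (hle : m ≤ n),
        (Ideal.Quotient.factorPow 𝔫 hle).comp (f n) = f m := by
      intro m n hmn
      ext x
      induction x using AdicCompletion.induction_on with
      | _ x =>
        simp only [f, RingHom.comp_apply]
        simp
        rw [Ideal.Quotient.eq, ← map_sub, ← Ideal.mem_comap]
        apply hle m
        have h3 := AdicCompletion.AdicCauchySequence.mk_eq_mk (I := maximalIdeal P) hmn x
        rw [Submodule.Quotient.eq] at h3
        simpa using h3
    refine ⟨IsAdicComplete.liftRingHom 𝔫 f hcompat, ?_⟩
    · ext p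
      refine (IsHausdorff.eq_iff_smodEq (I := 𝔫)).2 fun n => ?_
      have h4 := IsAdicComplete.mk_liftRingHom 𝔫 f hcompat n (algebraMap P _ p)
      have h5 : f n (algebraMap P _ p) = Ideal.Quotient.mk (𝔫 ^ n) (σ p) := by
        simp only [f, RingHom.comp_apply]
        have : AdicCompletion.evalₐ (maximalIdeal P) n
            (algebraMap P (AdicCompletion (maximalIdeal P) P) p) =
          Ideal.Quotient.mk _ p := (AdicCompletion.evalₐ (maximalIdeal P) n).commutes p
        rw [RingHom.coe_coe, this, Ideal.quotientMap_mk]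
      rw [h5, Ideal.Quotient.eq] at h4
      rw [SModEq.sub_mem]
      simpa using h4

end CIA
end

section
set_option linter.style.haveILetI false
set_option linter.unusedSectionVars false
namespace CIA

theorem exists_list_gen {A : Type*} [CommRing A] [IsNoetherianRing A] (I : Ideal A) :
    ∃ l : List A, Ideal.ofList l = I := by
  obtain ⟨s, hs⟩ := IsNoetherian.noetherian I
  refine ⟨s.toList, ?_⟩
  rw [← hs, Ideal.ofList]
  congr 1; ext; simp

theorem exists_list_lift {A B : Type*} (f : A → B) (hf : Function.Surjective f) (l : List B) :
    ∃ l' : List A, l'.map f = l :=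
  List.map_surjective_iff.2 hf l

theorem comap_map_sup {A B : Type*} [CommRing A] [CommRing B] (f : A →+* B)
    (hf : Function.Surjective f) (I : Ideal A) : (I.map f).comap f = I ⊔ RingHom.ker f := by
  rw [Ideal.comap_map_of_surjective f hf]; rfl

/-- krull -/
theorem mem_of_forall_pow {C : Type*} [CommRing C] [IsLocalRing C] [IsNoetherianRing C]
    {L : Ideal C} {c : C} (h : ∀ n : ℕ, c ∈ L ⊔ maximalIdeal C ^ n) : c ∈ L := by
  have h2 : Ideal.Quotient.mk L c ∈ (⨅ n, maximalIdeal C ^ n • (⊤ : Submodule C (C ⧸ L))) := by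
    rw [Submodule.mem_iInf]
    intro n
    obtain ⟨a, ha, b, hb, rfl⟩ := Submodule.mem_sup.1 (h n)
    rw [map_add, Ideal.Quotient.eq_zero_iff_mem.2 ha, zero_add]
    have : Ideal.Quotient.mk L b = b • (1 : C ⧸ L) := by
      rw [Algebra.smul_def]; simp
    rw [this]
    exact Submodule.smul_mem_smul hb trivial
  rw [Ideal.iInf_pow_smul_eq_bot_of_isLocalRing _ (maximalIdeal.isMaximal C).ne_top] at h2
  exact Ideal.Quotient.eq_zero_iff_mem.1 (by simpa using h2)

theorem exists_sub_mem_pow {P C : Type*} [CommRing P] [CommRing C] (φ : P →+* C) (I : Ideal P)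
    (h : ∀ c, ∃ p, c - φ p ∈ I.map φ) (n : ℕ) (c : C) : ∃ p, c - φ p ∈ I.map φ ^ n := by
  induction n generalizing c with
  | zero => exact ⟨0, by simp⟩
  | succ n ih =>
    obtain ⟨p, hp⟩ := ih c
    rw [← Ideal.map_pow] at hp
    suffices H : ∀ x ∈ (I ^ n).map φ, ∃ q, x - φ q ∈ I.map φ ^ (n + 1) by
      obtain ⟨q, hq⟩ := H _ hp
      exact ⟨p + q, by rw [map_add, ← sub_sub]; exact hq⟩
    intro x hx
    induction hx using Submodule.span_induction with
    | mem x hx =>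
      obtain ⟨p, hp, rfl⟩ := hx
      exact ⟨p, by simp⟩
    | zero => exact ⟨0, by simp⟩
    | add x y _ _ hx hy =>
      obtain ⟨p, hp⟩ := hx
      obtain ⟨q, hq⟩ := hy
      exact ⟨p + q, by rw [map_add, add_sub_add_comm]; exact add_mem hp hq⟩
    | smul a x hx' hx =>
      obtain ⟨p, hp⟩ := hx
      obtain ⟨q, hq⟩ := h a
      refine ⟨q * p, ?_⟩
      have hx'' : x ∈ I.map φ ^ n := by rw [← Ideal.map_pow]; exact hx'
      have : a • x - φ (q * p) = x * (a - φ q) + φ q * (x - φ p) := by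
        rw [map_mul, smul_eq_mul]; ring
      rw [this]
      exact add_mem (by rw [pow_succ]; exact Ideal.mul_mem_mul hx'' hq) (Ideal.mul_mem_left _ _ hp)

theorem comap_maximal {A B : Type*} [CommRing A] [CommRing B] [IsLocalRing A] [IsLocalRing B]
    (f : A →+* B) (hf : Function.Surjective f) : (maximalIdeal B).comap f = maximalIdeal A :=
  IsLocalRing.eq_maximalIdeal (Ideal.comap_isMaximal_of_surjective f hf)

theorem ker_regular {R C R'' : Type u} [CommRing R] [CommRing C] [CommRing R'']
    [IsLocalRing R] [IsLocalRing C] [IsLocalRing R'']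
    [IsNoetherianRing R] [IsNoetherianRing C]
    [Algebra R C] [Module.Flat R C] [IsLocalHom (algebraMap R C)]
    [Algebra R R''] [Module.Flat R R'']
    (rs : List C) (hrs : WR ((maximalIdeal R).map (algebraMap R C)) rs)
    (hrs' : (maximalIdeal R).map (algebraMap R C) ⊔ Ideal.ofList rs = maximalIdeal C)
    (zs : List R'') (hzs : WR ((maximalIdeal R).map (algebraMap R R'')) zs)
    (hzs' : (maximalIdeal R).map (algebraMap R R'') ⊔ Ideal.ofList zs = maximalIdeal R'')
    (τ : C →+* R'') (hτ : Function.Surjective τ) (hτR : τ.comp (algebraMap R C) = algebraMap R R'') :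
    ∃ l : List C, WR ⊥ l ∧ Ideal.ofList l = RingHom.ker τ := by
  set 𝔪 := (maximalIdeal R).map (algebraMap R C) with h𝔪
  set K := RingHom.ker τ with hK
  have hKm : K ≤ maximalIdeal C := IsLocalRing.le_maximalIdeal (RingHom.ker_ne_top τ)
  have h𝔪m : 𝔪 ≤ maximalIdeal C := hrs' ▸ le_sup_left
  have h𝔪τ : 𝔪.map τ = (maximalIdeal R).map (algebraMap R R'') := by
    rw [h𝔪, Ideal.map_map, hτR]
  obtain ⟨zc, rfl⟩ := exists_list_lift τ hτ zs
  obtain ⟨ks, hks⟩ := exists_list_gen K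
  have hzc : WR (𝔪 ⊔ K) zc := by
    rw [← h𝔪τ, wr_surj τ hτ, comap_map_sup τ hτ] at hzs
    exact hzs
  have hgen : 𝔪 ⊔ Ideal.ofList (ks ++ zc) = maximalIdeal C := by
    rw [Ideal.ofList_append, hks, ← comap_maximal τ hτ, ← hzs', ← h𝔪τ, ← Ideal.map_ofList,
      ← Ideal.map_sup, comap_map_sup τ hτ, sup_comm K, sup_assoc]
  obtain ⟨gs', hsub, hwr, hgs'⟩ := exists_sublist_gen le_rfl (ks ++ zc) hgen rs hrs hrs'
  obtain ⟨l1, l2, rfl, hl1, hl2⟩ := List.sublist_append_iff.1 hsub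
  have hl1K : Ideal.ofList l1 ≤ K := by
    rw [ofList_le]; intro a ha; rw [← hks]; exact mem_ofList (hl1.subset ha)
  have hzcm : ∀ r ∈ zc, r ∈ maximalIdeal C := by
    intro r hr; rw [← hgen]; exact Ideal.mem_sup_right (mem_ofList (by simp [hr]))
  have hl2wr : WR (𝔪 ⊔ K) l2 := by
    obtain ⟨l', hl'⟩ := hl2.exists_perm_append
    exact (wr_append.1 (wr_perm hzc hl' hzcm)).1
  have hl2m : Ideal.ofList l2 ≤ maximalIdeal C := by
    rw [ofList_le]; exact fun a ha => hzcm a (hl2.subset ha)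
  have step1 : 𝔪 ⊔ K ≤ 𝔪 ⊔ Ideal.ofList l1 := by
    apply Submodule.le_of_le_smul_of_le_jacobson_bot (IsNoetherian.noetherian _)
      (IsLocalRing.maximalIdeal_le_jacobson _)
    intro x hx
    have hx1 : x ∈ maximalIdeal C := (sup_le h𝔪m hKm) hx
    rw [← hgs', Ideal.ofList_append, ← sup_assoc] at hx1
    obtain ⟨a, ha, b, hb, rfl⟩ := Submodule.mem_sup.1 hx1
    refine Submodule.add_mem_sup ha ?_
    have hb' : b ∈ 𝔪 ⊔ K := by
      have := sub_mem hx ((sup_le_sup_left hl1K 𝔪) ha)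
      simpa using this
    exact (Ideal.mul_mono_left hl2m) (wr_inf hl2wr ⟨hb, hb'⟩)
  haveI : Module.Flat R (C ⧸ K) := by
    let τA : C →ₐ[R] R'' := { τ with commutes' := fun r => congrArg (fun f => f r) hτR }
    exact Module.Flat.of_linearEquiv (Ideal.quotientKerAlgEquivOfSurjective (f := τA) hτ).toLinearEquiv
  have step2 : K ≤ Ideal.ofList l1 := by
    apply Submodule.le_of_le_smul_of_le_jacobson_bot (IsNoetherian.noetherian _)
      (IsLocalRing.maximalIdeal_le_jacobson _)
    intro x hx
    have hx1 := step1 (Ideal.mem_sup_right hx)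
    obtain ⟨b, hb, a, ha, rfl⟩ := Submodule.mem_sup.1 hx1
    rw [add_comm]
    refine Submodule.add_mem_sup ha ?_
    have hb' : b ∈ K := by
      have := sub_mem hx (hl1K ha)
      simpa using this
    exact (Ideal.mul_mono_left h𝔪m) (flat_quot_inf (P := R) (maximalIdeal R) ⟨hb', hb⟩)
  refine ⟨l1, ?_, le_antisymm hl1K step2⟩
  exact wr_bot_of_fiber (R := R) (fun r hr => hKm (hl1K (mem_ofList hr))) (wr_append.1 hwr).1

theorem thmA {R P S R'' D : Type u} [CommRing R] [CommRing P] [CommRing S] [CommRing R''] [CommRing D]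
    [IsLocalRing R] [IsLocalRing P] [IsLocalRing S] [IsLocalRing R'']
    [IsNoetherianRing R] [IsNoetherianRing P] [IsNoetherianRing R'']
    [Algebra R P] [Module.Flat R P] [IsLocalHom (algebraMap R P)]
    [Algebra R R''] [Module.Flat R R''] [Algebra S D] [Module.FaithfullyFlat S D]
    [IsAdicComplete (maximalIdeal R'') R'']
    (hres : ∀ d : D, ∃ s, d - algebraMap S D s ∈ (maximalIdeal S).map (algebraMap S D))
    (rs : List P) (hrs : WR ((maximalIdeal R).map (algebraMap R P)) rs)
    (hrs' : (maximalIdeal R).map (algebraMap R P) ⊔ Ideal.ofList rs = maximalIdeal P)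
    (zs : List R'') (hzs : WR ((maximalIdeal R).map (algebraMap R R'')) zs)
    (hzs' : (maximalIdeal R).map (algebraMap R R'') ⊔ Ideal.ofList zs = maximalIdeal R'')
    (π : P →+* S) (hπ : Function.Surjective π)
    (g : R'' →+* D) (hg : Function.Surjective g)
    (hs : List R'') (hhs : WR ⊥ hs) (hhs' : Ideal.ofList hs = RingHom.ker g)
    (σ : P →+* R'') (hσf : σ.comp (algebraMap R P) = algebraMap R R'')
    (hσg : g.comp σ = (algebraMap S D).comp π)
    (hσm : (maximalIdeal P).map σ = maximalIdeal R'') :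
    ∃ l : List P, WR ⊥ l ∧ Ideal.ofList l = RingHom.ker π ∧ ∀ r ∈ l, r ∈ maximalIdeal P := by
  obtain ⟨C, _, _, _, _, _, _, hmC, _, hresC, hlift⟩ := exists_completion P
  obtain ⟨τ, hτ⟩ := hlift R'' (maximalIdeal R'') σ hσm.le
  have hπm : (maximalIdeal P).map π = maximalIdeal S := by
    rw [← comap_maximal π hπ, Ideal.map_comap_of_surjective π hπ]
  let ι := algebraMap S D
  have hιS : (maximalIdeal S).map ι = (maximalIdeal R'').map g := by
    rw [← hπm, Ideal.map_map, ← hσg, ← Ideal.map_map, hσm]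
  have hnt : Nontrivial D := by
    have h := Ideal.comap_map_eq_self_of_faithfullyFlat (B := D) (maximalIdeal S)
    by_contra hD
    rw [not_nontrivial_iff_subsingleton] at hD
    apply (maximalIdeal.isMaximal S).ne_top
    rw [← h, Subsingleton.elim (Ideal.map (algebraMap S D) (maximalIdeal S)) ⊤, Ideal.comap_top]
  have hkg : RingHom.ker g ≤ maximalIdeal R'' := IsLocalRing.le_maximalIdeal (RingHom.ker_ne_top g)
  have hresR : ∀ x : R'', ∃ p, x - σ p ∈ maximalIdeal R'' := by
    intro x
    obtain ⟨s, hs⟩ := hres (g x)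
    obtain ⟨p, rfl⟩ := hπ s
    refine ⟨p, ?_⟩
    have e : g (x - σ p) = g x - algebraMap S D (π p) := by
      rw [map_sub]; congr 1; exact congrArg (fun f => f p) hσg
    rw [← e] at hs
    have hs' : x - σ p ∈ ((maximalIdeal R'').map g).comap g := by rw [← hιS]; exact hs
    rw [comap_map_sup g hg] at hs'
    exact (sup_le le_rfl hkg) hs'
  have hmτ : (maximalIdeal C).map τ = maximalIdeal R'' := by
    rw [← hmC, Ideal.map_map, hτ, hσm]
  have hτs : Function.Surjective τ := by
    letI := τ.toAlgebra
    haveI : IsHausdorff ((maximalIdeal C).map τ) R'' := by rw [hmτ]; infer_instance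
    apply surjective_of_mk_map_comp_surjective (I := maximalIdeal C) τ
    intro y
    obtain ⟨x, rfl⟩ := Ideal.Quotient.mk_surjective y
    obtain ⟨p, hp⟩ := hresR x
    refine ⟨algebraMap P C p, ?_⟩
    have : τ (algebraMap P C p) = σ p := congrArg (fun f => f p) hτ
    rw [RingHom.comp_apply, this, eq_comm, Ideal.Quotient.eq, hmτ]
    exact hp
  letI : Algebra R C := ((algebraMap P C).comp (algebraMap R P)).toAlgebra
  haveI : IsScalarTower R P C := IsScalarTower.of_algebraMap_eq fun _ => rfl
  haveI : Module.Flat R C := Module.Flat.trans R P C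
  have hRC : algebraMap R C = (algebraMap P C).comp (algebraMap R P) := rfl
  haveI : IsLocalHom (algebraMap R C) := by rw [hRC]; infer_instance
  have hmRC : (maximalIdeal R).map (algebraMap R C) =
    ((maximalIdeal R).map (algebraMap R P)).map (algebraMap P C) := by rw [Ideal.map_map, hRC]
  obtain ⟨l1, hl1, hl1K⟩ := ker_regular (R := R) (C := C) (rs.map (algebraMap P C))
    (by rw [hmRC]; exact wr_map_flat hrs)
    (by rw [hmRC, ← Ideal.map_ofList, ← Ideal.map_sup, hrs', hmC]) zs hzs hzs' τ hτs
    (by rw [hRC, ← RingHom.comp_assoc, hτ, hσf])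
  obtain ⟨hc, rfl⟩ := exists_list_lift τ hτs hs
  have hhc : WR ⊥ (l1 ++ hc) := by
    rw [wr_append]
    refine ⟨hl1, ?_⟩
    rw [wr_surj τ hτs, ← RingHom.ker_eq_comap_bot] at hhs
    rwa [bot_sup_eq, hl1K]
  set J := RingHom.ker (g.comp τ) with hJ
  have hJ1 : Ideal.ofList (l1 ++ hc) = J := by
    rw [hJ, ← RingHom.comap_ker, ← hhs', ← Ideal.map_ofList, comap_map_sup τ hτs,
      Ideal.ofList_append, hl1K, sup_comm]
  have hJ2 : (RingHom.ker π).map (algebraMap P C) = J := by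
    have hcomm : ∀ p, g (τ (algebraMap P C p)) = algebraMap S D (π p) := by
      intro p
      have : τ (algebraMap P C p) = σ p := congrArg (fun f => f p) hτ
      rw [this]; exact congrArg (fun f => f p) hσg
    apply le_antisymm
    · rw [Ideal.map_le_iff_le_comap]
      intro p hp
      change g (τ (algebraMap P C p)) = 0
      rw [hcomm, (RingHom.mem_ker).1 hp, map_zero]
    · intro x hx
      apply mem_of_forall_pow
      intro n
      obtain ⟨p, hp⟩ := exists_sub_mem_pow (algebraMap P C) (maximalIdeal P)
        (by rw [hmC]; exact hresC) n x
      have h1 : algebraMap S D (π p) ∈ ((maximalIdeal S) ^ n).map (algebraMap S D) := by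
        have h2 : (g.comp τ) (x - algebraMap P C p) ∈ ((maximalIdeal P).map (algebraMap P C) ^ n).map (g.comp τ) :=
          Ideal.mem_map_of_mem _ hp
        rw [map_sub, (RingHom.mem_ker).1 hx, zero_sub, neg_mem_iff, RingHom.comp_apply, hcomm] at h2
        rw [Ideal.map_pow, Ideal.map_map] at h2
        have h3 : (g.comp τ).comp (algebraMap P C) = (algebraMap S D).comp π := by
          ext p; exact hcomm p
        rw [h3, ← Ideal.map_map, hπm, ← Ideal.map_pow] at h2
        exact h2
      have h2 : π p ∈ (maximalIdeal S) ^ n := by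
        rw [← Ideal.comap_map_eq_self_of_faithfullyFlat (B := D) ((maximalIdeal S) ^ n)]
        exact h1
      have h3 : p ∈ maximalIdeal P ^ n ⊔ RingHom.ker π := by
        rw [← comap_map_sup π hπ, Ideal.map_pow, hπm]; exact h2
      have h4 := Ideal.mem_map_of_mem (algebraMap P C) h3
      rw [Ideal.map_sup, Ideal.map_pow, sup_comm, hmC] at h4
      rw [hmC] at hp
      have := add_mem (Ideal.mem_sup_right hp) h4
      simpa using this
  obtain ⟨ks, hks⟩ := exists_list_gen (RingHom.ker π)
  haveI : Nontrivial S := inferInstance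
  have hkπ : RingHom.ker π ≤ maximalIdeal P := IsLocalRing.le_maximalIdeal (RingHom.ker_ne_top π)
  have hJm : J ≤ maximalIdeal C := IsLocalRing.le_maximalIdeal (RingHom.ker_ne_top _)
  obtain ⟨gs', hsub, hwr, hgs'⟩ := exists_sublist_gen (𝔪 := ⊥) hJm (ks.map (algebraMap P C))
    (by rw [bot_sup_eq, ← Ideal.map_ofList, hks, hJ2]) (l1 ++ hc) hhc (by rw [bot_sup_eq, hJ1])
  obtain ⟨l, hl, rfl⟩ := List.sublist_map_iff.1 hsub
  have hgen : Ideal.ofList l = RingHom.ker π := by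
    apply Ideal.map_injective_of_faithfullyFlat (B := C)
    rw [hJ2, ← hgs', bot_sup_eq, Ideal.map_ofList]
  refine ⟨l, wr_of_map_faithfullyFlat (C := C) (by rwa [Ideal.map_bot]), hgen, ?_⟩
  intro r hr
  exact hkπ (hgen ▸ mem_ofList hr)

end CIA
end

section
set_option linter.style.haveILetI false
set_option linter.unusedSectionVars false
namespace CIA

section
variable {Q : Type u} [CommRing Q]

theorem fd_congr {n : ℕ} {N N' : Type u} [AddCommGroup N] [Module Q N] [AddCommGroup N'] [Module Q N']
    (e : N ≃ₗ[Q] N') (h : FlatDimLE Q n N) : FlatDimLE Q n N' := by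
  cases n with
  | zero => haveI : Module.Flat Q N := h; exact Module.Flat.of_linearEquiv e.symm
  | succ n =>
    obtain ⟨F, _, _, f, hF, hf, hk⟩ := h
    refine ⟨F, _, _, e.toLinearMap ∘ₗ f, hF, e.surjective.comp hf, ?_⟩
    rw [LinearEquiv.ker_comp]; exact hk

theorem fd_succ {n : ℕ} {K F N : Type u} [AddCommGroup N] [Module Q N] [AddCommGroup F] [Module Q F]
    [AddCommGroup K] [Module Q K] [Module.Flat Q F] (i : K →ₗ[Q] F) (f : F →ₗ[Q] N)
    (hi : Function.Injective i) (hf : Function.Surjective f) (hex : Function.Exact i f)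
    (h : FlatDimLE Q n K) : FlatDimLE Q (n + 1) N := by
  refine ⟨F, _, _, f, inferInstance, hf, ?_⟩
  exact fd_congr (LinearEquiv.ofInjective i hi ≪≫ₗ LinearEquiv.ofEq _ _ (LinearMap.exact_iff.1 hex).symm) h

variable {A B C : Type u} [AddCommGroup A] [Module Q A] [AddCommGroup B] [Module Q B]
  [AddCommGroup C] [Module Q C]

theorem flat_left [Module.Flat Q B] [Module.Flat Q C] (i : A →ₗ[Q] B) (f : B →ₗ[Q] C)
    (hi : Function.Injective i) (hf : Function.Surjective f) (hex : Function.Exact i f) :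
    Module.Flat Q A := by
  rw [Module.Flat.iff_rTensor_injectiveₛ]
  intro P _ _ N
  letI : AddCommGroup P := Module.addCommMonoidToAddCommGroup Q
  have h1 := Module.Flat.rTensor_preserves_injective_linearMap (M := B) N.subtype N.injective_subtype
  have h2 := LinearMap.lTensor_injective_of_exact_of_flat f hf i hi hex N
  have e : (N.subtype.rTensor B) ∘ₗ (i.lTensor N) = (i.lTensor P) ∘ₗ (N.subtype.rTensor A) := by
    ext; simp
  have h3 : Function.Injective ((i.lTensor P) ∘ₗ (N.subtype.rTensor A)) := by
    rw [← e]; exact h1.comp h2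
  exact Function.Injective.of_comp h3

theorem flat_mid [Module.Flat Q A] [Module.Flat Q C] (i : A →ₗ[Q] B) (f : B →ₗ[Q] C)
    (hi : Function.Injective i) (hf : Function.Surjective f) (hex : Function.Exact i f) :
    Module.Flat Q B := by
  rw [Module.Flat.iff_rTensor_injectiveₛ]
  intro P _ _ N
  letI : AddCommGroup P := Module.addCommMonoidToAddCommGroup Q
  have hA := Module.Flat.rTensor_preserves_injective_linearMap (M := A) N.subtype N.injective_subtype
  have hC := Module.Flat.rTensor_preserves_injective_linearMap (M := C) N.subtype N.injective_subtype
  have h2 := LinearMap.lTensor_injective_of_exact_of_flat f hf i hi hex P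
  have e : (N.subtype.rTensor B) ∘ₗ (i.lTensor N) = (i.lTensor P) ∘ₗ (N.subtype.rTensor A) := by
    ext; simp
  have e' : (N.subtype.rTensor C) ∘ₗ (f.lTensor N) = (f.lTensor P) ∘ₗ (N.subtype.rTensor B) := by
    ext; simp
  refine (injective_iff_map_eq_zero _).2 fun x hx => ?_
  have h4 : f.lTensor N x = 0 := by
    apply hC
    rw [map_zero]
    have := LinearMap.congr_fun e' x
    simp only [LinearMap.comp_apply] at this
    rw [this, hx, map_zero]
  obtain ⟨y, rfl⟩ := ((lTensor_exact N hex hf) x).1 h4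
  have h5 : y = 0 := by
    apply hA
    apply h2
    have := LinearMap.congr_fun e y
    simp only [LinearMap.comp_apply] at this
    rw [← this, hx, map_zero, map_zero]
  rw [h5, map_zero]

theorem fd_left {n : ℕ} {A B C : Type u} [AddCommGroup A] [Module Q A] [AddCommGroup B] [Module Q B]
    [AddCommGroup C] [Module Q C] [Module.Flat Q C] (i : A →ₗ[Q] B) (f : B →ₗ[Q] C)
    (hi : Function.Injective i) (hf : Function.Surjective f) (hex : Function.Exact i f)
    (h : FlatDimLE Q n B) : FlatDimLE Q n A := by
  cases n with
  | zero => haveI : Module.Flat Q B := h; exact flat_left i f hi hf hex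
  | succ n =>
    obtain ⟨G, _, _, p, hG, hp, hk⟩ := h
    let q := f ∘ₗ p
    have hq : Function.Surjective q := hf.comp hp
    haveI : Module.Flat Q (LinearMap.ker q) :=
      flat_left (LinearMap.ker q).subtype q (Submodule.injective_subtype _) hq
        (LinearMap.exact_subtype_ker_map q)
    let ei := LinearEquiv.ofInjective i hi ≪≫ₗ LinearEquiv.ofEq _ _ (LinearMap.exact_iff.1 hex).symm
    have hei : ∀ a, (ei a : B) = i a := fun a => rfl
    let r : LinearMap.ker q →ₗ[Q] LinearMap.ker f := p.restrict (fun x hx => hx)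
    refine fd_congr ei.symm ?_
    refine fd_succ (Submodule.inclusion (LinearMap.ker_le_ker_comp p f)) r
      (Submodule.inclusion_injective _) ?_ ?_ hk
    · rintro ⟨b, hb⟩
      obtain ⟨g, rfl⟩ := hp b
      exact ⟨⟨g, hb⟩, rfl⟩
    · rintro ⟨x, hx⟩
      constructor
      · intro h
        exact ⟨⟨x, congrArg Subtype.val h⟩, rfl⟩
      · rintro ⟨⟨y, hy⟩, e⟩
        have : y = x := congrArg Subtype.val e
        subst this
        exact Subtype.ext hy

theorem fd_mid {n : ℕ} {A B C : Type u} [AddCommGroup A] [Module Q A] [AddCommGroup B] [Module Q B]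
    [AddCommGroup C] [Module Q C] [Module.Flat Q C] (i : A →ₗ[Q] B) (f : B →ₗ[Q] C)
    (hi : Function.Injective i) (hf : Function.Surjective f) (hex : Function.Exact i f)
    (h : FlatDimLE Q n A) : FlatDimLE Q n B := by
  induction n generalizing A B C with
  | zero => haveI : Module.Flat Q A := h; exact flat_mid i f hi hf hex
  | succ n ih =>
    obtain ⟨F, _, _, p, hF, hp, hk⟩ := h
    let q : (B →₀ Q) →ₗ[Q] B := Finsupp.linearCombination Q id
    have hq : Function.Surjective q := Finsupp.linearCombination_id_surjective Q B
    let s := f ∘ₗ q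
    have hs : Function.Surjective s := hf.comp hq
    haveI : Module.Flat Q (LinearMap.ker s) :=
      flat_left (A := LinearMap.ker s) (B := B →₀ Q) (C := C) (LinearMap.ker s).subtype s (Submodule.injective_subtype _) hs
        (LinearMap.exact_subtype_ker_map s)
    let t : (F × (B →₀ Q)) →ₗ[Q] B := (i ∘ₗ p).coprod q
    have hFB : Module.Flat Q (F × (B →₀ Q)) :=
      flat_mid (A := F) (B := F × (B →₀ Q)) (C := B →₀ Q) (LinearMap.inl Q F (B →₀ Q))
        (LinearMap.snd Q F (B →₀ Q)) LinearMap.inl_injective LinearMap.snd_surjective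
        (Function.Exact.inl_snd)
    refine ⟨F × (B →₀ Q), _, _, t, hFB, ?_, ?_⟩
    · intro b
      obtain ⟨g, rfl⟩ := hq b
      exact ⟨(0, g), by simp [t]⟩
    have hfi : ∀ a, f (i a) = 0 := hex.apply_apply_eq_zero
    have ht : ∀ x : F × (B →₀ Q), t x = i (p x.1) + q x.2 := fun x => rfl
    let j : LinearMap.ker p →ₗ[Q] LinearMap.ker t :=
      (LinearMap.inl Q F (B →₀ Q)).restrict (fun x hx => by
        have : p x = 0 := hx
        simp [ht, this])
    let v : LinearMap.ker t →ₗ[Q] LinearMap.ker s :=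
      (LinearMap.snd Q F (B →₀ Q)).restrict (fun x hx => by
        have h1 : t x = 0 := hx
        have h2 := congrArg f h1
        rw [ht, map_add, hfi, zero_add, map_zero] at h2
        exact h2)
    refine ih (A := LinearMap.ker p) (B := LinearMap.ker t) (C := LinearMap.ker s) j v ?_ ?_ ?_ hk
    · intro x y hxy
      have := congrArg (fun z => z.1.1) hxy
      exact Subtype.ext this
    · rintro ⟨y, hy⟩
      obtain ⟨a, ha⟩ := (hex (q y)).1 hy
      obtain ⟨w, rfl⟩ := hp a
      refine ⟨⟨(-w, y), ?_⟩, rfl⟩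
      simp [ht, ha]
    · rintro ⟨⟨x, y⟩, hx⟩
      constructor
      · intro h
        have hy : y = 0 := congrArg Subtype.val h
        subst hy
        have h1 : i (p x) + q 0 = 0 := hx
        rw [map_zero, add_zero] at h1
        have h2 : p x = 0 := hi (by rw [h1, map_zero])
        exact ⟨⟨x, h2⟩, rfl⟩
      · rintro ⟨z, e⟩
        have : (0 : B →₀ Q) = y := congrArg (fun z => z.1.2) e
        exact Subtype.ext this.symm

theorem fd_ker {n : ℕ} {F N : Type u} [AddCommGroup F] [Module Q F] [AddCommGroup N] [Module Q N]
    [Module.Flat Q F] (f : F →ₗ[Q] N) (hf : Function.Surjective f) (h : FlatDimLE Q (n + 1) N) :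
    FlatDimLE Q n (LinearMap.ker f) := by
  obtain ⟨F', _, _, f', hF', hf', hk⟩ := h
  let t : (F × F') →ₗ[Q] N := f.coprod (-f')
  have ht : ∀ x, t x = f x.1 - f' x.2 := fun x => by simp [t, sub_eq_add_neg]
  have h1 : FlatDimLE Q n (LinearMap.ker t) := by
    let j : LinearMap.ker f' →ₗ[Q] LinearMap.ker t :=
      (LinearMap.inr Q F F').restrict (fun x hx => by
        have : f' x = 0 := hx
        simp [ht, this])
    refine fd_mid (C := F) j (LinearMap.fst Q F F' ∘ₗ (LinearMap.ker t).subtype) ?_ ?_ ?_ hk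
    · intro x y hxy
      exact Subtype.ext (congrArg (fun z => z.1.2) hxy)
    · intro x
      obtain ⟨y, hy⟩ := hf' (f x)
      exact ⟨⟨(x, y), by simp [ht, hy]⟩, rfl⟩
    · rintro ⟨⟨x, y⟩, hx⟩
      constructor
      · intro h
        have h0 : x = 0 := h
        subst h0
        have h1 : f' y = 0 := by simpa [ht] using hx
        exact ⟨⟨y, h1⟩, rfl⟩
      · rintro ⟨z, e⟩
        have : (0 : F) = x := congrArg (fun z => z.1.1) e
        exact this.symm
  let j : LinearMap.ker f →ₗ[Q] LinearMap.ker t :=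
      (LinearMap.inl Q F F').restrict (fun x hx => by
        have : f x = 0 := hx
        simp [ht, this])
  refine fd_left (C := F') j (LinearMap.snd Q F F' ∘ₗ (LinearMap.ker t).subtype) ?_ ?_ ?_ h1
  · intro x y hxy
    exact Subtype.ext (congrArg (fun z => z.1.1) hxy)
  · intro x
    obtain ⟨y, hy⟩ := hf (f' x)
    exact ⟨⟨(y, x), by simp [ht, hy]⟩, rfl⟩
  · rintro ⟨⟨y, x⟩, hx⟩
    constructor
    · intro h
      have h0 : x = 0 := h
      subst h0
      have h1 : f y = 0 := by simpa [ht] using hx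
      exact ⟨⟨y, h1⟩, rfl⟩
    · rintro ⟨z, e⟩
      have : (0 : F') = x := congrArg (fun z => z.1.2) e
      exact this.symm

theorem fd_baseChange {n : ℕ} {N : Type u} [AddCommGroup N] [Module Q N] (Q' : Type u) [CommRing Q']
    [Algebra Q Q'] [Module.Flat Q Q'] (h : FlatDimLE Q n N) : FlatDimLE Q' n (Q' ⊗[Q] N) := by
  induction n generalizing N with
  | zero => haveI : Module.Flat Q N := h; exact (inferInstance : Module.Flat Q' (Q' ⊗[Q] N))
  | succ n ih =>
    obtain ⟨F, _, _, f, hF, hf, hk⟩ := h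
    refine fd_succ (AlgebraTensorModule.lTensor Q' Q' (LinearMap.ker f).subtype)
      (AlgebraTensorModule.lTensor Q' Q' f) ?_ ?_ ?_ (ih hk)
    · exact Module.Flat.lTensor_preserves_injective_linearMap (M := Q') _ (Submodule.injective_subtype _)
    · exact LinearMap.lTensor_surjective Q' hf
    · exact lTensor_exact Q' (LinearMap.exact_subtype_ker_map f) hf

open Polynomial in
theorem poly_flat (N : Type u) [AddCommGroup N] [Module Q N] [Module Q[X] N] [IsScalarTower Q Q[X] N]
    (h : Module.Flat Q N) : FlatDimLE Q[X] 1 N := by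
  let ε : Q[X] ⊗[Q] N →ₗ[Q[X]] N := LinearMap.liftBaseChange Q[X] (LinearMap.id (R := Q) (M := N))
  let x : N →ₗ[Q] N := (LinearMap.lsmul Q[X] N (X : Q[X])).restrictScalars Q
  let d : Q[X] ⊗[Q] N →ₗ[Q[X]] Q[X] ⊗[Q] N :=
    (X : Q[X]) • LinearMap.id - AlgebraTensorModule.lTensor Q[X] Q[X] x
  have hd : ∀ (p : Q[X]) (n : N), d (p ⊗ₜ n) = (X * p) ⊗ₜ n - p ⊗ₜ ((X : Q[X]) • n) := by
    intro p n; simp [d, x, TensorProduct.smul_tmul']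
  have hε : ∀ (p : Q[X]) (n : N), ε (p ⊗ₜ n) = p • n := by
    intro p n; simp [ε]
  refine fd_succ (n := 0) d ε ?_ ?_ ?_ (inferInstance : Module.Flat Q[X] (Q[X] ⊗[Q] N))
  · let e := PolynomialModule.polynomialTensorProductLEquivPolynomialModule Q N
    have he : ∀ (p : Q[X]) (n : N) i, (e (p ⊗ₜ n)).coeff i = p.coeff i • n := by
      intro p n i
      have : e (p ⊗ₜ n) = p • PolynomialModule.single Q 0 n := by
        simp [e, PolynomialModule.polynomialTensorProductLEquivPolynomialModule]
        rfl
      rw [this, PolynomialModule.smul_single_apply]; simp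
    have hrec : ∀ t i, (e (d t)).coeff (i + 1) = (e t).coeff i - (X : Q[X]) • (e t).coeff (i + 1) := by
      intro t i
      induction t with
      | zero => simp
      | tmul p n =>
        rw [hd, map_sub]
        have : ∀ a b : PolynomialModule Q N, (a - b).coeff = a.coeff - b.coeff := fun a b => rfl
        rw [this, Finsupp.sub_apply, he, he, he, he, coeff_X_mul, smul_comm]
      | add a b ha hb =>
        simp only [map_add, PolynomialModule.coeff_add, Finsupp.add_apply, ha, hb, smul_add]
        abel
    refine (injective_iff_map_eq_zero d).2 fun t ht => ?_
    have h1 : ∀ i, (e t).coeff i = (X : Q[X]) • (e t).coeff (i + 1) := by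
      intro i
      have := hrec t i
      rw [ht, map_zero, PolynomialModule.coeff_zero, Finsupp.zero_apply] at this
      exact (sub_eq_zero.1 this.symm)
    have h2 : ∀ k i, (e t).coeff i = (X ^ k : Q[X]) • (e t).coeff (i + k) := by
      intro k
      induction k with
      | zero => simp
      | succ k ih => intro i; rw [ih i, h1 (i + k), smul_smul, ← pow_succ]; rfl
    apply e.injective
    rw [map_zero]
    apply PolynomialModule.coeff_injective
    ext i
    obtain ⟨m, hm⟩ := (e t).coeff.support.exists_nat_subset_range
    rw [h2 m i]
    have : (e t).coeff (i + m) = 0 := by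
      by_contra hne
      have := hm (Finsupp.mem_support_iff.2 hne)
      simp at this
    rw [this, smul_zero]; rfl
  · intro n; exact ⟨1 ⊗ₜ n, by simp [hε]⟩
  · have hεd : ∀ t, ε (d t) = 0 := by
      intro t
      induction t with
      | zero => simp
      | tmul p n => rw [hd, map_sub, hε, hε, smul_smul, mul_comm, sub_self]
      | add a b ha hb => rw [map_add, map_add, ha, hb, add_zero]
    have key : ∀ t, t - 1 ⊗ₜ ε t ∈ LinearMap.range d := by
      have hmon : ∀ (k : ℕ) (n : N), (X ^ k : Q[X]) ⊗ₜ[Q] n - 1 ⊗ₜ ((X ^ k : Q[X]) • n) ∈ LinearMap.range d := by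
        intro k
        induction k with
        | zero => intro n; simp
        | succ k ih =>
          intro n
          have h1 := add_mem (LinearMap.mem_range_self d ((X ^ k) ⊗ₜ n)) (ih ((X : Q[X]) • n))
          rw [hd, ← pow_succ', sub_add_sub_cancel, smul_smul, ← pow_succ] at h1
          exact h1
      intro t
      induction t with
      | zero => simp
      | tmul p n =>
        rw [hε]
        induction p using Polynomial.induction_on' with
        | add p q hp hq =>
          rw [add_smul, add_tmul, tmul_add, add_sub_add_comm]
          exact add_mem hp hq
        | monomial k a =>
          have := hmon k (a • n)
          rw [← Polynomial.C_mul_X_pow_eq_monomial, ← Polynomial.smul_eq_C_mul, smul_tmul, smul_assoc,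
            ← smul_comm (X ^ k : Q[X]) a n]
          exact this
      | add a b ha hb =>
        rw [map_add, tmul_add, add_sub_add_comm]
        exact add_mem ha hb
    intro t
    constructor
    · intro h
      have := key t
      rw [h, tmul_zero, sub_zero] at this
      exact this
    · rintro ⟨y, rfl⟩; exact hεd y

open Polynomial in
theorem poly_fd {n : ℕ} (N : Type u) [AddCommGroup N] [Module Q N] [Module Q[X] N]
    [IsScalarTower Q Q[X] N] (h : FlatDimLE Q n N) : FlatDimLE Q[X] (n + 1) N := by
  induction n generalizing N with
  | zero => exact poly_flat N h
  | succ n ih =>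
    let q : (N →₀ Q[X]) →ₗ[Q[X]] N := Finsupp.linearCombination Q[X] id
    have hq : Function.Surjective q := Finsupp.linearCombination_id_surjective Q[X] N
    refine ⟨(N →₀ Q[X]), _, _, q, inferInstance, hq, ih _ ?_⟩
    haveI : Module.Flat Q (N →₀ Q[X]) := inferInstance
    exact fd_ker (q.restrictScalars Q) hq h

end

end CIA
end

section
set_option linter.style.haveILetI false
set_option linter.unusedSectionVars false
namespace CIA

section
variable {Q : Type u} [CommRing Q]

theorem pd_congr {n : ℕ} {N N' : Type u} [AddCommGroup N] [Module Q N] [AddCommGroup N'] [Module Q N']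
    (e : N ≃ₗ[Q] N') (h : ProjDimLE Q n N) : ProjDimLE Q n N' := by
  cases n with
  | zero => haveI : Module.Projective Q N := h; exact Module.Projective.of_equiv e
  | succ n =>
    obtain ⟨F, _, _, f, hF, hf, hk⟩ := h
    refine ⟨F, _, _, e.toLinearMap ∘ₗ f, hF, e.surjective.comp hf, ?_⟩
    rw [LinearEquiv.ker_comp]; exact hk

open CategoryTheory in
theorem pd_of_cat {n : ℕ} (N : Type u) [AddCommGroup N] [Module Q N]
    (h : HasProjectiveDimensionLT (ModuleCat.of Q N) (n + 1)) : ProjDimLE Q n N := by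
  induction n generalizing N with
  | zero =>
    have := projective_iff_hasProjectiveDimensionLT_one.2 h
    exact (IsProjective.iff_projective N).2 this
  | succ n ih =>
    let q : (N →₀ Q) →ₗ[Q] N := Finsupp.linearCombination Q id
    have hq : Function.Surjective q := Finsupp.linearCombination_id_surjective Q N
    refine ⟨(N →₀ Q), _, _, q, inferInstance, hq, ih _ ?_⟩
    let S : ShortComplex (ModuleCat.{u} Q) := ShortComplex.mk
      (ModuleCat.ofHom (X := LinearMap.ker q) (Y := N →₀ Q) (LinearMap.ker q).subtype)
      (ModuleCat.ofHom (X := N →₀ Q) q) (by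
        rw [← ModuleCat.ofHom_comp, LinearMap.comp_ker_subtype]; rfl)
    have hS : S.ShortExact :=
      { exact := (ShortComplex.ShortExact.moduleCat_exact_iff_function_exact S).2
          (LinearMap.exact_subtype_ker_map q)
        mono_f := (ModuleCat.mono_iff_injective _).2 (Submodule.injective_subtype _)
        epi_g := (ModuleCat.epi_iff_surjective _).2 hq }
    have hproj : Projective S.X₂ := (IsProjective.iff_projective (N →₀ Q)).1 inferInstance
    exact (hS.hasProjectiveDimensionLT_X₃_iff n hproj).1 h

open CategoryTheory in
theorem pd_quotient [IsLocalRing Q] [IsNoetherianRing Q] (R' : Type u) [CommRing R'] [Algebra Q R']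
    (hs : Function.Surjective (algebraMap Q R'))
    (h : GeneratedByRegularSequence Q (RingHom.ker (algebraMap Q R'))) : ProjDimFinite Q R' := by
  obtain ⟨rs, hr, hrs⟩ := h
  have h1 := ModuleCat.projectiveDimension_quotient_eq_length.{u} rs hr
  refine ⟨rs.length, ?_⟩
  have h2 : ProjDimLE Q rs.length (Shrink.{u} (Q ⧸ Ideal.ofList rs)) := by
    apply pd_of_cat
    rw [← projectiveDimension_lt_iff, h1]
    exact_mod_cast Nat.lt_succ_self _
  refine pd_congr ((Shrink.linearEquiv Q _) ≪≫ₗ (Submodule.quotEquivOfEq _ _ hrs) ≪≫ₗ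
    (Ideal.quotientKerAlgEquivOfSurjective (f := Algebra.ofId Q R') hs).toLinearEquiv) h2

end

end CIA
end

section
set_option linter.style.haveILetI false
set_option linter.unusedSectionVars false
namespace CIA

theorem genReg_of_wr {Q : Type u} [CommRing Q] [IsLocalRing Q] [IsNoetherianRing Q] {I : Ideal Q}
    (hI : I ≠ ⊤) (rs : List Q) (h : WR ⊥ rs) (hrs : Ideal.ofList rs = I) :
    GeneratedByRegularSequence Q I := by
  refine ⟨rs, ⟨(wr_bot_iff rs).2 h, ?_⟩, hrs⟩
  rw [hrs]
  intro h
  apply hI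
  simpa using h.symm

theorem hci_mk_aux {R R' Q M N : Type u} [CommRing R] [CommRing R'] [CommRing Q] [AddCommGroup M]
    [Module R M] [AddCommGroup N] [Module Q N] [IsLocalRing R'] [IsLocalRing Q]
    [IsNoetherianRing R'] [IsNoetherianRing Q] (f : R →+* R') (iA : Algebra R R') (hf : iA = f.toAlgebra)
    (g : Q →+* R') [IsLocalHom f]
    [Module.Flat R R'] (hs : Function.Surjective g)
    (rs : List Q) (h : WR ⊥ rs) (hrs : Ideal.ofList rs = RingHom.ker g)
    (e : R' ⊗[R] M ≃+ N) (he : ∀ (q : Q) x, e (g q • x) = q • e x)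
    (hN : FlatDimFinite Q N) : HasFiniteCIDim R M := by
  subst hf
  have hg := genReg_of_wr (RingHom.ker_ne_top g) rs h hrs
  refine ⟨R', Q, _, _, f, g, ⟨inferInstance, inferInstance, inferInstance, inferInstance, inferInstance,
    IsLocalHom.of_surjective g hs, inferInstance, hs, hg⟩, ?_, ?_⟩
  · obtain ⟨n, hn⟩ := hN
    refine ⟨n, ?_⟩
    letI : Algebra R R' := f.toAlgebra
    letI : Module Q (R' ⊗[R] M) := Module.compHom _ g
    exact fd_congr (LinearEquiv.symm { e with map_smul' := fun q x => he q x }) hn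
  · letI := g.toAlgebra
    exact pd_quotient R' hs hg

theorem hci_mk {R R' Q M N : Type u} [CommRing R] [CommRing R'] [CommRing Q] [AddCommGroup M]
    [Module R M] [AddCommGroup N] [Module Q N] [IsLocalRing R'] [IsLocalRing Q]
    [IsNoetherianRing R'] [IsNoetherianRing Q] [Algebra R R']
    (g : Q →+* R') [IsLocalHom (algebraMap R R')]
    [Module.Flat R R'] (hs : Function.Surjective g)
    (rs : List Q) (h : WR ⊥ rs) (hrs : Ideal.ofList rs = RingHom.ker g)
    (e : R' ⊗[R] M ≃+ N) (he : ∀ (q : Q) x, e (g q • x) = q • e x)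
    (hN : FlatDimFinite Q N) : HasFiniteCIDim R M :=
  hci_mk_aux (algebraMap R R') inferInstance (Algebra.algebra_ext _ _ fun _ => rfl) g hs rs h hrs e he hN

theorem hci_elim {R M : Type u} [CommRing R] [AddCommGroup M] [Module R M] (h : HasFiniteCIDim R M) :
    ∃ (R' Q : Type u) (_ : CommRing R') (_ : CommRing Q) (_ : IsLocalRing R') (_ : IsLocalRing Q)
      (_ : Algebra R R') (_ : Algebra Q R') (N : Type u) (_ : AddCommGroup N) (_ : Module Q N)
      (e : R' ⊗[R] M ≃+ N) (rs : List Q),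
      IsNoetherianRing R' ∧ IsNoetherianRing Q ∧ IsLocalHom (algebraMap R R') ∧ Module.Flat R R' ∧
      (∀ (q : Q) (x : R' ⊗[R] M), e (algebraMap Q R' q • x) = q • e x) ∧
      Function.Surjective (algebraMap Q R') ∧ WR ⊥ rs ∧ Ideal.ofList rs = RingHom.ker (algebraMap Q R') ∧
      FlatDimFinite Q N := by
  obtain ⟨R', Q, _, _, f, g, ⟨h1, h2, h3, h4, h5, h6, h7, h8, rs, hr, hrs⟩, hfd, -⟩ := h
  refine ⟨R', Q, _, _, h1, h2, f.toAlgebra, g.toAlgebra, _, _, _, AddEquiv.refl _, rs, h3, h4, h5, h7, ?_, h8,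
    (wr_bot_iff rs).1 hr.toIsWeaklyRegular, hrs, hfd⟩
  intro q x
  rfl

attribute [local instance] Algebra.TensorProduct.rightAlgebra in
theorem hci_quot {P S M : Type u} [CommRing P] [CommRing S] [IsLocalRing P] [IsLocalRing S]
    [IsNoetherianRing P] [Algebra P S] (hs : Function.Surjective (algebraMap P S))
    [AddCommGroup M] [Module P M] [Module S M] [IsScalarTower P S M]
    (l : List P) (hl : WR ⊥ l) (hl' : Ideal.ofList l = RingHom.ker (algebraMap P S))
    (h : HasFiniteCIDim P M) : HasFiniteCIDim S M := by
  obtain ⟨P', Q, _, _, _, _, _, _, N, _, _, e, rs, _, _, _, _, he, hsQ, hrs, hrs', hfd⟩ := hci_elim h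
  let S' := S ⊗[P] P'
  have hP'S : ∀ x : P', algebraMap P' S' x = 1 ⊗ₜ x := fun x => rfl
  have hsurj : Function.Surjective (algebraMap P' S') := by
    intro y
    obtain ⟨x, hx⟩ := Algebra.TensorProduct.includeRight_surjective (R := P) (S := S) P' hs y
    exact ⟨x, hx⟩
  have hPS : ∀ p : P, algebraMap P' S' (algebraMap P P' p) = algebraMap S S' (algebraMap P S p) := by
    intro p
    rw [← IsScalarTower.algebraMap_apply P P' S', ← IsScalarTower.algebraMap_apply P S S']
  have hker : RingHom.ker (algebraMap P' S') = (RingHom.ker (algebraMap P S)).map (algebraMap P P') := by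
    apply le_antisymm
    · intro x hx
      have h1 := Algebra.TensorProduct.rTensor_ker (R := P) (C := P') (Algebra.ofId P S) hs
      have h2 : (1 : P) ⊗ₜ[P] x ∈ RingHom.ker (Algebra.TensorProduct.map (Algebra.ofId P S) (AlgHom.id P P')) := by
        rw [RingHom.mem_ker, Algebra.TensorProduct.map_tmul, map_one]
        exact hx
      rw [h1] at h2
      have h3 := Ideal.mem_map_of_mem (Algebra.TensorProduct.lid P P' : P ⊗[P] P' →+* P') h2
      have h4 : (Algebra.TensorProduct.lid P P' : P ⊗[P] P' →+* P') ((1 : P) ⊗ₜ[P] x) = x := by simp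
      rw [h4] at h3
      rw [AlgHom.coe_ideal_map, Ideal.map_map] at h3
      have h5 : ((Algebra.TensorProduct.lid P P' : P ⊗[P] P' →+* P').comp
        ((Algebra.TensorProduct.includeLeft : P →ₐ[P] P ⊗[P] P') : P →+* P ⊗[P] P')) = algebraMap P P' := by
        ext p
        simp [Algebra.smul_def]
      rw [h5] at h3
      exact h3
    · rw [Ideal.map_le_iff_le_comap]
      intro p hp
      rw [Ideal.mem_comap, RingHom.mem_ker, hPS, (RingHom.mem_ker).1 hp, map_zero]
  haveI : Nontrivial S' := by
    by_contra hn
    rw [not_nontrivial_iff_subsingleton] at hn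
    have h1 : (1 : P') ∈ RingHom.ker (algebraMap P' S') := Subsingleton.elim _ _
    rw [hker] at h1
    have h2 : (RingHom.ker (algebraMap P S)).map (algebraMap P P') ≤ maximalIdeal P' := by
      rw [Ideal.map_le_iff_le_comap]
      refine (IsLocalRing.le_maximalIdeal (RingHom.ker_ne_top _)).trans ?_
      exact (IsLocalRing.maximalIdeal_comap (algebraMap P P')).ge
    exact (Ideal.ne_top_iff_one _).1 (maximalIdeal.isMaximal P').ne_top (h2 h1)
  haveI : IsLocalRing S' := IsLocalRing.of_surjective' (algebraMap P' S') hsurj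
  haveI : IsNoetherianRing S' := isNoetherianRing_of_surjective _ _ (algebraMap P' S') hsurj
  haveI : IsLocalHom (algebraMap P' S') := IsLocalHom.of_surjective _ hsurj
  haveI : IsLocalHom (algebraMap S S') := by
    constructor
    intro s hsu
    obtain ⟨p, rfl⟩ := hs s
    rw [← hPS] at hsu
    exact ((isUnit_of_map_unit _ _ (isUnit_of_map_unit _ _ hsu))).map (algebraMap P S)
  obtain ⟨lc, hlc⟩ := exists_list_lift _ hsQ (l.map (algebraMap P P'))
  have hlP' : WR (⊥ : Ideal P') (l.map (algebraMap P P')) := by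
    have := wr_map_flat (C := P') hl
    rwa [Ideal.map_bot] at this
  rw [← hlc, wr_surj _ hsQ, ← RingHom.ker_eq_comap_bot, ← hrs'] at hlP'
  refine hci_mk (R := S) (R' := S') (N := N) ((algebraMap P' S').comp (algebraMap Q P')) (hsurj.comp hsQ)
    (rs ++ lc) (wr_append.2 ⟨hrs, by rwa [bot_sup_eq]⟩) ?_
    ((Algebra.IsPushout.cancelBaseChange P P' S S' M).toAddEquiv.trans e) ?_ hfd
  · rw [← RingHom.comap_ker, hker, ← hl', Ideal.map_ofList, ← hlc, ← Ideal.map_ofList, comap_map_sup _ hsQ,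
      Ideal.ofList_append, hrs', sup_comm]
  · intro q x
    have h1 := (Algebra.IsPushout.cancelBaseChange P P' S S' M).map_smul (algebraMap Q P' q) x
    rw [← algebraMap_smul S' (algebraMap Q P' q) x] at h1
    exact (congrArg e h1).trans (he q _)

end CIA
end

section
set_option linter.style.haveILetI false
set_option linter.unusedSectionVars false
namespace CIA

theorem step_equiv {A A' P2 P' B Q' M N : Type u} [CommRing A] [CommRing A'] [CommRing P2] [CommRing P']
    [CommRing B] [CommRing Q'] [Algebra A A'] [Algebra A P2] [Algebra P2 P'] [Algebra A' P'] [Algebra A P']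
    [IsScalarTower A A' P'] [IsScalarTower A P2 P'] [Algebra B A'] [Algebra B Q'] [Algebra Q' P'] [Algebra B P']
    [IsScalarTower B A' P'] [IsScalarTower B Q' P'] (W : Submonoid A) [IsLocalization W P2]
    [Algebra.IsPushout B Q' A' P'] [Module.Flat B Q']
    [AddCommGroup M] [Module A M] [Module P2 M] [IsScalarTower A P2 M]
    [AddCommGroup N] [Module B N] (e1 : A' ⊗[A] M ≃+ N)
    (he1 : ∀ (b : B) x, e1 (algebraMap B A' b • x) = b • e1 x) {n : ℕ} (h : FlatDimLE B n N) :
    ∃ (N' : Type u) (_ : AddCommGroup N') (_ : Module Q' N') (e : P' ⊗[P2] M ≃+ N'),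
      (∀ (q : Q') x, e (algebraMap Q' P' q • x) = q • e x) ∧ FlatDimLE Q' n N' := by
  have h1 : FlatDimLE B n (A' ⊗[A] M) :=
    fd_congr (LinearEquiv.symm { e1 with map_smul' := fun q x => (congrArg e1 (algebraMap_smul A' q x).symm).trans (he1 q x) }) h
  have h2 := fd_baseChange Q' h1
  haveI := IsLocalization.tensorProduct_compatibleSMul W P2 P' M
  let f1 : P' ⊗[P2] M ≃ₗ[P'] P' ⊗[A] M := equivOfCompatibleSMul A P2 P' P' M
  let f2 : P' ⊗[A'] (A' ⊗[A] M) ≃ₗ[P'] P' ⊗[A] M := AlgebraTensorModule.cancelBaseChange A A' P' P' M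
  let f3 : P' ⊗[A'] (A' ⊗[A] M) ≃ₗ[Q'] Q' ⊗[B] (A' ⊗[A] M) :=
    Algebra.IsPushout.cancelBaseChange B Q' A' P' (A' ⊗[A] M)
  refine ⟨_, _, _, (f1.trans f2.symm).toAddEquiv.trans f3.toAddEquiv, ?_, h2⟩
  intro q x
  have e1 := (f1.trans f2.symm).map_smul (algebraMap Q' P' q) x
  have e2 := f3.map_smul q ((f1.trans f2.symm) x)
  rw [← algebraMap_smul P' q] at e2
  exact (congrArg f3 e1).trans e2

theorem common_field {k K K' : Type u} [Field k] [Field K] [Field K'] (a : k →+* K) (b : k →+* K') :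
    ∃ (L : Type u) (_ : Field L) (α : K →+* L) (β : K' →+* L), ∀ r : k, α (a r) = β (b r) := by
  letI := a.toAlgebra
  letI := b.toAlgebra
  obtain ⟨I, hI⟩ := Ideal.exists_maximal (K ⊗[k] K')
  letI : Field ((K ⊗[k] K') ⧸ I) := Ideal.Quotient.field I
  refine ⟨(K ⊗[k] K') ⧸ I, inferInstance, (Ideal.Quotient.mk I).comp Algebra.TensorProduct.includeLeftRingHom,
    (Ideal.Quotient.mk I).comp (Algebra.TensorProduct.includeRight : K' →ₐ[k] K ⊗[k] K').toRingHom, ?_⟩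
  intro r
  simp only [RingHom.comp_apply, AlgHom.toRingHom_eq_coe, RingHom.coe_coe]
  congr 1
  change algebraMap k K r ⊗ₜ[k] (1 : K') = (1 : K) ⊗ₜ[k] algebraMap k K' r
  rw [Algebra.algebraMap_eq_smul_one, Algebra.algebraMap_eq_smul_one, smul_tmul]

open Polynomial in
attribute [local instance] Polynomial.algebra in
theorem step_hci {R M : Type u} [CommRing R] [IsLocalRing R] (p : Ideal R[X]) [p.IsPrime]
    (hp : p.comap C = maximalIdeal R) [AddCommGroup M] [Module R M] [Module (Localization.AtPrime p) M]
    [IsScalarTower R (Localization.AtPrime p) M] (h : HasFiniteCIDim R M) :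
    HasFiniteCIDim (Localization.AtPrime p) M := by
  obtain ⟨R', Q, _, _, _, _, _, _, N, _, _, e, rs, _, _, _, _, he, hsQ, hrs, hrs', n, hfd⟩ := hci_elim h
  -- the common field
  obtain ⟨L, _, α, β, hαβ⟩ : ∃ (L : Type u) (_ : Field L) (α : p.ResidueField →+* L)
      (β : ResidueField R' →+* L), ∀ r : R, α (algebraMap R[X] _ (C r)) = β (residue R' (algebraMap R R' r)) := by
    let k := ResidueField R
    let a0 : k →+* p.ResidueField := Ideal.Quotient.lift (maximalIdeal R)
      ((algebraMap R[X] p.ResidueField).comp C) (by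
        intro r hr
        rw [← hp, Ideal.mem_comap] at hr
        simpa using hr)
    let b0 : k →+* ResidueField R' := ResidueField.map (algebraMap R R')
    obtain ⟨L, iL, α, β, h⟩ := common_field a0 b0
    exact ⟨L, iL, α, β, fun r => h (residue R r)⟩
  let θ : R'[X] →+* L := eval₂RingHom (β.comp (residue R')) (α (algebraMap R[X] _ X))
  have hθ : θ.comp (mapRingHom (algebraMap R R')) = α.comp (algebraMap R[X] _) := by
    apply Polynomial.ringHom_ext
    · intro r; simp [θ, hαβ]
    · simp [θ]
  let r : Ideal R'[X] := RingHom.ker θ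
  haveI : r.IsPrime := RingHom.ker_isPrime θ
  have hpr : p = r.comap (mapRingHom (algebraMap R R')) := by
    rw [RingHom.comap_ker, hθ]
    ext x
    simp [RingHom.mem_ker]
  let q : Ideal Q[X] := r.comap (mapRingHom (algebraMap Q R'))
  have hsX : Function.Surjective (mapRingHom (algebraMap Q R')) := Polynomial.map_surjective _ hsQ
  letI : Algebra (Localization.AtPrime p) (Localization.AtPrime r) := (Localization.localRingHom p r _ hpr).toAlgebra
  letI : Algebra (Localization.AtPrime q) (Localization.AtPrime r) := (Localization.localRingHom q r _ rfl).toAlgebra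
  haveI : IsScalarTower R[X] (Localization.AtPrime p) (Localization.AtPrime r) := IsScalarTower.of_algebraMap_eq
    fun x => (Localization.localRingHom_to_map p r _ hpr x).symm
  haveI : IsScalarTower Q[X] (Localization.AtPrime q) (Localization.AtPrime r) := IsScalarTower.of_algebraMap_eq
    fun x => (Localization.localRingHom_to_map q r _ rfl x).symm
  letI : Module R[X] M := Module.compHom _ (algebraMap R[X] (Localization.AtPrime p))
  haveI : IsScalarTower R[X] (Localization.AtPrime p) M := ⟨fun b a x => by rw [Algebra.smul_def, mul_smul]; rfl⟩
  haveI : IsScalarTower R R[X] M := ⟨fun b a x => by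
    rw [← algebraMap_smul (Localization.AtPrime p) a, ← smul_assoc,
      ← algebraMap_smul (Localization.AtPrime p) (b • a)]
    congr 1
    rw [Algebra.smul_def, map_mul, Algebra.smul_def]; rfl⟩
  have hloc : Algebra.algebraMapSubmonoid R'[X] q.primeCompl = r.primeCompl := by
    ext x
    constructor
    · rintro ⟨y, hy, rfl⟩
      exact hy
    · intro hx
      obtain ⟨y, rfl⟩ := hsX x
      exact ⟨y, hx, rfl⟩
  haveI : IsLocalization (Algebra.algebraMapSubmonoid R'[X] q.primeCompl) (Localization.AtPrime r) := by
    rw [hloc]; infer_instance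
  haveI : Algebra.IsPushout Q[X] (Localization.AtPrime q) R'[X] (Localization.AtPrime r) :=
    (Algebra.isPushout_of_isLocalization (R := Q[X]) q.primeCompl (Localization.AtPrime q) R'[X] (Localization.AtPrime r)).symm
  -- N1
  let c1 : R'[X] ⊗[R[X]] M ≃ₗ[R'] R' ⊗[R] M := Algebra.IsPushout.cancelBaseChange R R' R[X] R'[X] M
  have hfdN : FlatDimLE Q n (R'[X] ⊗[R[X]] M) := by
    refine fd_congr (LinearEquiv.symm { c1.toAddEquiv.trans e with map_smul' := fun q x => ?_ }) hfd
    have h1 : q • x = algebraMap Q R' q • x := (algebraMap_smul R' q x).symm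
    change e (c1 (q • x)) = _
    rw [h1]
    exact (congrArg e (c1.map_smul (algebraMap Q R' q) x)).trans (he q _)
  have hfdX := poly_fd _ hfdN
  obtain ⟨N', _, _, e', he', hfd'⟩ := step_equiv (A := R[X]) (A' := R'[X]) (P2 := Localization.AtPrime p)
    (P' := Localization.AtPrime r) (B := Q[X]) (Q' := Localization.AtPrime q) (M := M) p.primeCompl
    (AddEquiv.refl _) (fun b x => algebraMap_smul R'[X] b x) hfdX
  have hflat : Module.Flat (Localization.AtPrime p) (Localization.AtPrime r) := by
    have : (mapRingHom (algebraMap R R')).Flat := by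
      have : Module.Flat R[X] R'[X] := Module.Flat.isBaseChange (R := R) (M := R') (S := R[X]) (N := R'[X])
        (f := (IsScalarTower.toAlgHom R R' R'[X]).toLinearMap) (Algebra.IsPushout.out)
      exact this
    exact this.localRingHom r _ hpr
  haveI : IsLocalHom (algebraMap (Localization.AtPrime p) (Localization.AtPrime r)) :=
    Localization.isLocalHom_localRingHom p r _ hpr
  haveI : IsNoetherianRing (Localization.AtPrime r) := IsLocalization.isNoetherianRing r.primeCompl _ inferInstance
  haveI : IsNoetherianRing (Localization.AtPrime q) := IsLocalization.isNoetherianRing q.primeCompl _ inferInstance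
  haveI : Module.Flat Q[X] (Localization.AtPrime q) := IsLocalization.flat _ q.primeCompl
  haveI : Module.Flat Q (Localization.AtPrime q) := Module.Flat.trans Q Q[X] _
  have hwr := wr_map_flat (C := Localization.AtPrime q) hrs
  rw [Ideal.map_bot] at hwr
  refine hci_mk (R := Localization.AtPrime p) (R' := Localization.AtPrime r) (algebraMap (Localization.AtPrime q) _)
    ?_ (rs.map (algebraMap Q (Localization.AtPrime q))) hwr ?_ e' he' ⟨_, hfd'⟩
  · exact RingHom.surjective_localRingHom_of_surjective (mapRingHom (algebraMap Q R')) hsX r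
  · rw [← Ideal.map_ofList, hrs', IsScalarTower.algebraMap_eq Q Q[X] (Localization.AtPrime q), ← Ideal.map_map]
    have := IsLocalization.ker_map (M := q.primeCompl) (T := r.primeCompl) (S := Localization.AtPrime q)
      (Q := Localization.AtPrime r) (g := mapRingHom (algebraMap Q R')) hloc
    refine Eq.trans ?_ this.symm
    rw [Polynomial.ker_mapRingHom]
    rfl

end CIA
end

section
set_option linter.style.haveILetI false
set_option linter.unusedSectionVars false
namespace CIA

open Polynomial in
theorem poly_prime_gen {P : Type u} [CommRing P] [IsLocalRing P] (p : Ideal P[X]) [p.IsPrime]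
    (hp : p.comap C = maximalIdeal P) :
    ∃ fs : List P[X], WR ((maximalIdeal P).map C) fs ∧ (maximalIdeal P).map C ⊔ Ideal.ofList fs = p := by
  let ρ : P[X] →+* (ResidueField P)[X] := mapRingHom (residue P)
  have hρ : Function.Surjective ρ := Polynomial.map_surjective _ residue_surjective
  have hker : RingHom.ker ρ = (maximalIdeal P).map C := by
    rw [Polynomial.ker_mapRingHom, ker_residue]
  have hle : RingHom.ker ρ ≤ p := by
    rw [hker, Ideal.map_le_iff_le_comap, hp]
  obtain ⟨f0, hf0⟩ := (IsPrincipalIdealRing.principal (p.map ρ)).principal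
  obtain ⟨f, rfl⟩ := hρ f0
  have h1 : p = Ideal.span {f} ⊔ RingHom.ker ρ := by
    rw [← comap_map_sup ρ hρ, Ideal.map_span, Set.image_singleton]
    change p = Ideal.comap ρ (Submodule.span _ {ρ f})
    rw [← hf0, comap_map_sup ρ hρ, sup_eq_left.2 hle]
  by_cases hf : ρ f = 0
  · refine ⟨[], by simp [WR], ?_⟩
    rw [← hker, Ideal.ofList_nil, sup_bot_eq]
    refine le_antisymm hle ?_
    conv_lhs => rw [h1]
    refine sup_le ?_ le_rfl
    rw [Ideal.span_singleton_le_iff_mem]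
    exact hf
  · refine ⟨[f], ?_, ?_⟩
    · rw [← hker]
      simp only [WR, and_true]
      intro c hc
      rw [RingHom.mem_ker, map_mul] at hc
      exact (mul_eq_zero.1 hc).resolve_left hf
    · rw [← hker, Ideal.ofList_singleton, sup_comm, ← h1]

open Polynomial in
theorem step_P {P T M : Type u} [CommRing P] [IsLocalRing P] [IsNoetherianRing P] [CommRing T] [IsLocalRing T]
    [Algebra P T] [IsLocalHom (algebraMap P T)] [AddCommGroup M] [Module T M] (t : T)
    (h : @HasFiniteCIDim P _ M _ (Module.compHom M (algebraMap P T))) :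
    ∃ (P2 : Type u) (_ : CommRing P2) (_ : IsLocalRing P2) (_ : Algebra P P2) (_ : Algebra P2 T)
      (fs : List P2), IsNoetherianRing P2 ∧ IsScalarTower P P2 T ∧ Module.Flat P P2 ∧
      IsLocalHom (algebraMap P P2) ∧ IsLocalHom (algebraMap P2 T) ∧
      WR ((maximalIdeal P).map (algebraMap P P2)) fs ∧
      (maximalIdeal P).map (algebraMap P P2) ⊔ Ideal.ofList fs = maximalIdeal P2 ∧
      (∃ x : P2, algebraMap P2 T x = t) ∧
      @HasFiniteCIDim P2 _ M _ (Module.compHom M (algebraMap P2 T)) := by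
  let θ : P[X] →+* T := eval₂RingHom (algebraMap P T) t
  let p : Ideal P[X] := (maximalIdeal T).comap θ
  have hp : p.comap C = maximalIdeal P := by
    rw [Ideal.comap_comap]
    have : θ.comp C = algebraMap P T := by ext; simp [θ]
    rw [this]
    exact maximalIdeal_comap _
  have hu : ∀ y : p.primeCompl, IsUnit (θ y) := by
    intro y
    by_contra hy
    exact y.2 hy
  let τ : Localization.AtPrime p →+* T := IsLocalization.lift hu
  have hτ : ∀ x, τ (algebraMap P[X] _ x) = θ x := fun x => IsLocalization.lift_eq hu x
  letI : Algebra (Localization.AtPrime p) T := τ.toAlgebra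
  have hst : IsScalarTower P (Localization.AtPrime p) T := IsScalarTower.of_algebraMap_eq fun x => by
    rw [IsScalarTower.algebraMap_apply P P[X] (Localization.AtPrime p)]
    refine Eq.trans ?_ (hτ _).symm
    simp [θ]
  have hloc2 : IsLocalHom (algebraMap (Localization.AtPrime p) T) := by
    constructor
    intro x hx
    obtain ⟨a, s, rfl⟩ := IsLocalization.exists_mk'_eq p.primeCompl x
    have h1 : θ a = τ (IsLocalization.mk' _ a s) * θ s := by
      rw [← hτ, ← hτ, ← map_mul, IsLocalization.mk'_spec]
    have h2 : IsUnit (θ a) := by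
      rw [h1]; exact IsUnit.mul hx (hu s)
    have h3 : a ∈ p.primeCompl := fun h => h h2
    have h4 : IsUnit (algebraMap P[X] (Localization.AtPrime p) a) := IsLocalization.map_units _ ⟨a, h3⟩
    rw [← IsLocalization.mk'_spec (Localization.AtPrime p) a s] at h4
    exact isUnit_of_mul_isUnit_left h4
  have hloc1 : IsLocalHom (algebraMap P (Localization.AtPrime p)) := by
    constructor
    intro x hx
    have := hx.map (algebraMap (Localization.AtPrime p) T)
    rw [← IsScalarTower.algebraMap_apply] at this
    exact isUnit_of_map_unit _ _ this
  haveI : Module.Flat P[X] (Localization.AtPrime p) := IsLocalization.flat _ p.primeCompl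
  obtain ⟨fs, hfs, hfs'⟩ := poly_prime_gen p hp
  refine ⟨Localization.AtPrime p, inferInstance, inferInstance, inferInstance, inferInstance,
    fs.map (algebraMap P[X] _), IsLocalization.isNoetherianRing p.primeCompl _ inferInstance, hst,
    Module.Flat.trans P P[X] _, hloc1, hloc2, ?_, ?_, ⟨algebraMap P[X] _ X, (hτ X).trans (by simp [θ])⟩, ?_⟩
  · have := wr_map_flat (C := Localization.AtPrime p) hfs
    rwa [Ideal.map_map] at this
  · have := congrArg (Ideal.map (algebraMap P[X] (Localization.AtPrime p))) hfs'
    rw [Ideal.map_sup, Ideal.map_map, Ideal.map_ofList, Localization.AtPrime.map_eq_maximalIdeal] at this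
    exact this
  · letI : Module P M := Module.compHom M (algebraMap P T)
    letI : Module (Localization.AtPrime p) M := Module.compHom M (algebraMap (Localization.AtPrime p) T)
    haveI : IsScalarTower P (Localization.AtPrime p) M := ⟨fun b a x => by
      change algebraMap (Localization.AtPrime p) T (b • a) • x = algebraMap P T b • algebraMap (Localization.AtPrime p) T a • x
      rw [Algebra.smul_def, map_mul, mul_smul, ← IsScalarTower.algebraMap_apply]⟩
    exact step_hci p hp h

theorem exists_P {R T M : Type u} [CommRing R] [IsLocalRing R] [IsNoetherianRing R] [CommRing T] [IsLocalRing T]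
    [Algebra R T] [IsLocalHom (algebraMap R T)] [AddCommGroup M] [Module T M] (ts : List T)
    (h : @HasFiniteCIDim R _ M _ (Module.compHom M (algebraMap R T))) :
    ∃ (P2 : Type u) (_ : CommRing P2) (_ : IsLocalRing P2) (_ : Algebra R P2) (_ : Algebra P2 T)
      (fs : List P2), IsNoetherianRing P2 ∧ IsScalarTower R P2 T ∧ Module.Flat R P2 ∧
      IsLocalHom (algebraMap R P2) ∧ IsLocalHom (algebraMap P2 T) ∧
      WR ((maximalIdeal R).map (algebraMap R P2)) fs ∧
      (maximalIdeal R).map (algebraMap R P2) ⊔ Ideal.ofList fs = maximalIdeal P2 ∧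
      (∀ t ∈ ts, ∃ x : P2, algebraMap P2 T x = t) ∧
      @HasFiniteCIDim P2 _ M _ (Module.compHom M (algebraMap P2 T)) := by
  induction ts with
  | nil =>
    refine ⟨R, inferInstance, inferInstance, inferInstance, inferInstance, [], inferInstance, inferInstance, inferInstance,
      ⟨fun a ha => ha⟩, inferInstance, by simp [WR], ?_, by simp, h⟩
    rw [Ideal.ofList_nil, sup_bot_eq]
    exact Ideal.map_id _
  | cons t ts ih =>
    obtain ⟨P, _, _, _, _, fs, _, _, _, _, _, hfs, hfs', hts, hci⟩ := ih
    obtain ⟨P2, _, _, _, _, gs, hN, _, _, hl1, hl2, hgs, hgs', ht, hci2⟩ := step_P t hci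
    letI : Algebra R P2 := ((algebraMap P P2).comp (algebraMap R P)).toAlgebra
    haveI : IsScalarTower R P P2 := IsScalarTower.of_algebraMap_eq fun x => rfl
    have hmap : Ideal.map (algebraMap P P2) (maximalIdeal P) = (maximalIdeal R).map (algebraMap R P2) ⊔
        Ideal.ofList (fs.map (algebraMap P P2)) := by
      rw [← hfs', Ideal.map_sup, Ideal.map_map, Ideal.map_ofList]; rfl
    refine ⟨P2, inferInstance, inferInstance, inferInstance, inferInstance, fs.map (algebraMap P P2) ++ gs, hN,
      ?_, Module.Flat.trans R P P2, ?_, hl2, ?_, ?_, ?_, hci2⟩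
    · refine IsScalarTower.of_algebraMap_eq fun x => ?_
      rw [IsScalarTower.algebraMap_apply R P T, IsScalarTower.algebraMap_apply P P2 T]; rfl
    · exact ⟨fun x hx => isUnit_of_map_unit (algebraMap R P) _ (isUnit_of_map_unit (algebraMap P P2) _ hx)⟩
    · have := wr_map_flat (C := P2) hfs
      rw [Ideal.map_map] at this
      refine wr_append.2 ⟨this, ?_⟩
      rw [hmap] at hgs
      exact hgs
    · rw [Ideal.ofList_append, ← sup_assoc, ← hmap, hgs']
    · intro s hs
      rcases List.mem_cons.1 hs with rfl | hs
      · exact ht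
      · obtain ⟨x, hx⟩ := hts s hs
        exact ⟨algebraMap P P2 x, by rw [← IsScalarTower.algebraMap_apply, hx]⟩

end CIA
end

section
set_option linter.style.haveILetI false
set_option linter.unusedSectionVars false
namespace CIA

theorem hci_module_congr {R M : Type u} [CommRing R] [AddCommGroup M] (i1 i2 : Module R M)
    (h : ∀ (r : R) (m : M), (letI := i1; r • m) = (letI := i2; r • m))
    (hc : @HasFiniteCIDim R _ M _ i1) : @HasFiniteCIDim R _ M _ i2 := by
  have : i1 = i2 := Module.ext' i1 i2 h
  rwa [← this]

theorem main_aux {R S M R'' D : Type u} [CommRing R] [CommRing S]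
    [IsLocalRing R] [IsLocalRing S] [IsNoetherianRing R] [IsNoetherianRing S]
    [Algebra R S] [IsLocalHom (algebraMap R S)]
    [AddCommGroup M] [Module R M] [Module S M] [IsScalarTower R S M] [Algebra.EssFiniteType R S]
    [CommRing R''] [CommRing D] [IsLocalRing R''] [IsLocalRing D] [IsNoetherianRing R'']
    [Algebra R R''] [Module.Flat R R''] [Algebra S D] [Module.FaithfullyFlat S D]
    [IsLocalHom (algebraMap S D)]
    [IsAdicComplete (maximalIdeal R'') R'']
    (hmD : (maximalIdeal S).map (algebraMap S D) = maximalIdeal D)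
    (hres : ∀ d : D, ∃ s, d - algebraMap S D s ∈ (maximalIdeal S).map (algebraMap S D))
    (zs : List R'') (hzs : WR ((maximalIdeal R).map (algebraMap R R'')) zs)
    (hzs' : (maximalIdeal R).map (algebraMap R R'') ⊔ Ideal.ofList zs = maximalIdeal R'')
    (g : R'' →+* D) (hg : Function.Surjective g) [IsLocalHom g]
    (hgf : g.comp (algebraMap R R'') = (algebraMap S D).comp (algebraMap R S))
    (hs : List R'') (hhs : WR ⊥ hs) (hhs' : Ideal.ofList hs = RingHom.ker g)
    (hfd : HasFiniteCIDim R M) : HasFiniteCIDim S M := by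
  let a : S →+* D := algebraMap S D
  let T := a.pullback g
  haveI : IsLocalRing T := RingHom.isLocalRing_pullback a g
  let π0 : T →+* S := a.pullbackFst g
  let σ0 : T →+* R'' := a.pullbackSnd g
  haveI hπ0 : IsLocalHom π0 := RingHom.isLocalHom_pullbackFst a g
  haveI hσ0 : IsLocalHom σ0 := RingHom.isLocalHom_pullbackSnd a g
  have hcomm : ∀ t, a (π0 t) = g (σ0 t) := fun t => t.2
  let ρ : R →+* T := ((algebraMap R S).prod (algebraMap R R'')).codRestrict T
    (fun r => (RingHom.congr_fun hgf r).symm)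
  letI : Algebra R T := ρ.toAlgebra
  have hπρ : ∀ r, π0 (algebraMap R T r) = algebraMap R S r := fun r => rfl
  have hσρ : ∀ r, σ0 (algebraMap R T r) = algebraMap R R'' r := fun r => rfl
  haveI : IsLocalHom (algebraMap R T) := ⟨fun r hr => by
    have := hr.map π0
    rw [hπρ] at this
    exact isUnit_of_map_unit _ _ this⟩
  letI iT : Module T M := Module.compHom M π0
  have hfd' : @HasFiniteCIDim R _ M _ (Module.compHom M (algebraMap R T)) := by
    refine hci_module_congr _ _ ?_ hfd
    intro r m
    exact (algebraMap_smul S r m).symm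
  -- the list
  have hlift : ∀ s : S, ∃ t : T, π0 t = s := RingHom.surjective_pullbackFst_of_surjective a g hg
  choose lft hlft using hlift
  have hj : ∀ j : R'', ∃ t : T, g j = 0 → σ0 t = j := by
    intro j
    by_cases h : g j = 0
    · exact ⟨⟨(0, j), (map_zero a).trans h.symm⟩, fun _ => rfl⟩
    · exact ⟨0, fun h' => absurd h' h⟩
  choose jl hjl using hj
  obtain ⟨P, _, _, _, _, fs, _, _, _, _, _, hfs, hfs', hts, hciP⟩ :=
    exists_P (M := M) ((Algebra.EssFiniteType.finset R S).toList.map lft ++ hs.map jl) hfd'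
  let π : P →+* S := π0.comp (algebraMap P T)
  let σ : P →+* R'' := σ0.comp (algebraMap P T)
  haveI hπl : IsLocalHom π := ⟨fun x hx => isUnit_of_map_unit (algebraMap P T) _ (isUnit_of_map_unit π0 _ hx)⟩
  haveI hσl : IsLocalHom σ := ⟨fun x hx => isUnit_of_map_unit (algebraMap P T) _ (isUnit_of_map_unit σ0 _ hx)⟩
  have hπR : ∀ r, π (algebraMap R P r) = algebraMap R S r := by
    intro r
    rw [← hπρ, IsScalarTower.algebraMap_apply R P T]; rfl
  have hσR : ∀ r, σ (algebraMap R P r) = algebraMap R R'' r := by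
    intro r
    rw [← hσρ, IsScalarTower.algebraMap_apply R P T]; rfl
  have hadj : ∀ s ∈ Algebra.adjoin R ((Algebra.EssFiniteType.finset R S : Finset S) : Set S), ∃ x, π x = s := by
    intro s hs
    refine Algebra.adjoin_induction (fun x hx => ?_) (fun r => ⟨_, hπR r⟩) ?_ ?_ hs
    · obtain ⟨p, hp⟩ := hts (lft x) (List.mem_append_left _ (List.mem_map_of_mem (Finset.mem_toList.2 hx)))
      exact ⟨p, by rw [← hlft x, ← hp]; rfl⟩
    · rintro x y - - ⟨p, rfl⟩ ⟨q, rfl⟩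
      exact ⟨p + q, map_add _ _ _⟩
    · rintro x y - - ⟨p, rfl⟩ ⟨q, rfl⟩
      exact ⟨p * q, map_mul _ _ _⟩
  have hπ : Function.Surjective π := by
    intro s
    obtain ⟨t, ht, htu, hst⟩ := (Algebra.essFiniteType_cond_iff R S (Algebra.EssFiniteType.finset R S)).1
      (Algebra.EssFiniteType.isLocalization R S) s
    obtain ⟨x, rfl⟩ := hadj t ht
    obtain ⟨y, hy⟩ := hadj _ hst
    have hxu : IsUnit x := isUnit_of_map_unit π _ htu
    obtain ⟨x', hx'⟩ := hxu.exists_right_inv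
    refine ⟨y * x', ?_⟩
    rw [map_mul, hy, mul_assoc, ← map_mul, hx', map_one, mul_one]
  have hσg : g.comp σ = a.comp π := by
    ext x
    exact (hcomm _).symm
  have hσf : σ.comp (algebraMap R P) = algebraMap R R'' := by
    ext x; exact hσR x
  have hcs : (maximalIdeal R'').comap σ = maximalIdeal P := maximalIdeal_comap σ
  have hσm : (maximalIdeal P).map σ = maximalIdeal R'' := by
    apply le_antisymm
    · rw [Ideal.map_le_iff_le_comap, hcs]
    · have h1 : ((maximalIdeal P).map σ).map g = maximalIdeal D := by
        rw [Ideal.map_map, hσg, ← Ideal.map_map, ← hmD]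
        congr 1
        rw [← comap_maximal π hπ, Ideal.map_comap_of_surjective π hπ]
      have h2 : RingHom.ker g ≤ (maximalIdeal P).map σ := by
        rw [← hhs', ofList_le]
        intro j hj
        have hgj : g j = 0 := by
          have := mem_ofList hj
          rwa [hhs'] at this
        obtain ⟨p, hp⟩ := hts (jl j) (List.mem_append_right _ (List.mem_map_of_mem hj))
        have h3 : σ p = j := by
          rw [← hjl j hgj, ← hp]; rfl
        rw [← h3]
        apply Ideal.mem_map_of_mem
        rw [← hcs, Ideal.mem_comap, h3, mem_maximalIdeal]
        intro hu
        have := hu.map g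
        rw [hgj] at this
        exact not_isUnit_zero this
      rw [← sup_eq_left.2 h2, ← comap_map_sup g hg, h1]
      exact (maximalIdeal_comap g).ge
  obtain ⟨l, hl, hl', -⟩ := thmA hres fs hfs hfs' zs hzs hzs' π hπ g hg hs hhs hhs' σ hσf hσg hσm
  letI : Algebra P S := π.toAlgebra
  letI : Module P M := Module.compHom M (algebraMap P T)
  haveI : IsScalarTower P S M := ⟨fun p s m => by rw [Algebra.smul_def, mul_smul]; rfl⟩
  exact hci_quot hπ l hl hl' hciP

theorem main_thm {R S M : Type u} [CommRing R] [CommRing S]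
    [IsLocalRing R] [IsLocalRing S] [IsNoetherianRing R] [IsNoetherianRing S]
    [Algebra R S] [IsLocalHom (algebraMap R S)]
    [AddCommGroup M] [Module R M] [Module S M] [IsScalarTower R S M] [Algebra.EssFiniteType R S]
    (hci : IsCIAt R S (algebraMap R S) (maximalIdeal S))
    (hfd : HasFiniteCIDim R M) : HasFiniteCIDim S M := by
  obtain ⟨R'', _, f, g, ⟨hgf, hN, ⟨hl, hcompl⟩, ⟨hfl, hflat, hNq, hlq, zq, hzq, hzq'⟩, hg, hgl⟩, hs, hhs, hhs'⟩ := hci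
  letI : Algebra R R'' := f.toAlgebra
  haveI : Module.Flat R R'' := hflat
  have hmax := AdicCompletion.maximalIdeal_eq_map (R := S)
  obtain ⟨zs, hzs⟩ := exists_list_lift _ (Ideal.Quotient.mk_surjective (I := Ideal.map f (maximalIdeal R))) zq
  have hwz := (wr_bot_iff zq).1 hzq.toIsWeaklyRegular
  rw [← hzs, wr_surj _ Ideal.Quotient.mk_surjective, ← RingHom.ker_eq_comap_bot, Ideal.mk_ker] at hwz
  haveI : Module.FaithfullyFlat S (AdicCompletion (maximalIdeal S) S) :=
    Module.FaithfullyFlat.of_flat_of_isLocalHom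
  refine main_aux (R'' := R'') (D := AdicCompletion (maximalIdeal S) S) hmax.symm ?_ zs hwz ?_ g hg hgf hs
    ((wr_bot_iff hs).1 hhs.toIsWeaklyRegular) hhs' hfd
  · intro c
    obtain ⟨p, hp⟩ := Ideal.Quotient.mk_surjective (AdicCompletion.evalOneₐ (maximalIdeal S) c)
    refine ⟨p, ?_⟩
    rw [← AdicCompletion.ker_evalOneₐ_eq_map _ (IsNoetherian.noetherian _), RingHom.mem_ker,
      map_sub, sub_eq_zero]
    refine hp.symm.trans ?_
    exact ((AdicCompletion.evalOneₐ (maximalIdeal S)).commutes p).symm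
  · have h1 : Ideal.ofList zq = maximalIdeal _ := hzq'
    have h2 := congrArg (Ideal.comap (Ideal.Quotient.mk (Ideal.map f (maximalIdeal R)))) h1
    rw [comap_maximal _ Ideal.Quotient.mk_surjective, ← hzs, ← Ideal.map_ofList,
      comap_map_sup _ Ideal.Quotient.mk_surjective, Ideal.mk_ker, sup_comm] at h2
    exact h2

end CIA
end


variable (R S M : Type u) [CommRing R] [CommRing S]
  [IsLocalRing R] [IsLocalRing S] [IsNoetherianRing R] [IsNoetherianRing S]
  [Algebra R S] [IsLocalHom (algebraMap R S)]
  [AddCommGroup M] [Module R M] [Module S M] [IsScalarTower R S M] [Module.Finite S M]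

/-- Ascent of complete intersection flat dimension. -/
theorem ascent_CIfd_of_eft_ci [Algebra.EssFiniteType R S]
    (hci : IsCIAt R S (algebraMap R S) (maximalIdeal S))
    
    (hfd : HasFiniteCIDim R M) :
    HasFiniteCIDim S M := by
  exact CIA.main_thm hci hfd
end
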